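/- Let ψ : [3,∞) → (0,∞) be monotonically decreasing with ψ(X) → 0 as X → ∞. Then there exist a multiplicative function f : ℕ → [−1,1], with g := 1 ∗ f, and a constant c > 0 such that for all sufficiently large X, max_{X < x ≤ X²} |L_f(x) − M̃_g(w₀x)| ≥ c·ψ(X)/(log X)^{1−2/π}. -/

import Mathlib

/-!
The function `f` is completely multiplicative, with `f(p)` close to `sgn cos (t log p)` for a
suitable frequency `t ≠ 0`, and does not depend on `ψ`.

**The multiplicative function.** The value `f(p)` is the Fejér mean of the square wave
`sgn cos θ` at `θ = t log p`, of degree about `(log p)^(2/5)`; Fejér means stay in `[-1, 1]`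
(`fej_mem`). Multiplying by `p^{-it}` shifts the harmonics, and only one of them, with coefficient
`2/π`, becomes constant. The others contribute twisted sums `∑ Λ(n) n^{-1-iτ}` with `|τ| ≥ |t|`,
which are `O(|τ|^{3/2})` (`Sv_bound`) by a lower bound for `ζ` on `Re s = 1` obtained from the
3-4-1 inequality. Hence `∑_{n ≤ N} Λ(n) f(n) n^{-1-it} = (2/π) log N + O((log N)^{3/5})`
(`resonance`).

**Partial sums.** From `log = Λ ∗ 1`, the sums `∑_{n ≤ e^V} f(n) n^{-1-it}` and their primitive
satisfy an approximate linear differential equation, so that they are `C₀ V^{2/π} + O(V^{3/5})`.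
The constant `C₀` is nonzero because the `L`-series of `f(n) n^{-1-it}` is at least of order
`σ^{-2/π}` as `σ → 0+` (`LL_main`, `LL_aa`).

**The error term.** With `x = e^u`, the difference `L_f(x) - M̃_g(w₀ x)` is
`∑ f(n)/n · κ(u - log n)` for an explicit integrable kernel `κ` (`err_eq`). By Fourier inversion
the Fourier transform of `κ` is nonzero at some `t ≠ 0`, and this is the frequency to use.
Integrating against `e^{-itu}` over `[U, 2U]`, where `U = log X`, turns the difference into
`κ̂(t)` times a difference of the partial sums above, up to `O(1)`; so the integral is
`≫ U^{2/π}` (`main_lower`) and the supremum over `X < x ≤ X²` is `≫ U^{2/π - 1}`. Since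
`ψ(X) ≤ ψ(3)`, the claim follows with `c` divided by `ψ(3)`.
-/

open Finset Filter

noncomputable def Lsum (h : ℕ → ℝ) (x : ℝ) : ℝ := ∑ n ∈ Finset.Icc 1 ⌊x⌋₊, h n / n

noncomputable def Mt (h : ℕ → ℝ) (x : ℝ) : ℝ := (∑ n ∈ Finset.Icc 1 ⌊x⌋₊, h n) / x

noncomputable def w0 : ℝ := Real.exp (1 - Real.eulerMascheroniConstant)

def IsMult (f : ℕ → ℝ) : Prop := f 1 = 1 ∧ ∀ m n : ℕ, Nat.Coprime m n → f (m * n) = f m * f n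

noncomputable def dconv (f : ℕ → ℝ) : ℕ → ℝ := fun n => ∑ d ∈ n.divisors, f d

/-! ### The zeta function near the line `Re s = 1` -/

/-- If `G` is a primitive of `φ` then `φ (a + 1)` differs from `∫_a^{a+1} φ = G (a + 1) - G a`
by at most a bound for `|φ'|`. -/
lemma tele_bound {φ G φ' : ℝ → ℂ} {a b : ℝ}
    (hG : ∀ x ∈ Set.Icc a (a + 1), HasDerivAt G (φ x) x)
    (hφ : ∀ x ∈ Set.Icc a (a + 1), HasDerivAt φ (φ' x) x)
    (hb : ∀ x ∈ Set.Icc a (a + 1), ‖φ' x‖ ≤ b) :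
    ‖φ (a + 1) - (G (a + 1) - G a)‖ ≤ b := by
  have h1 : ∀ x ∈ Set.Icc a (a + 1), ‖φ x - φ (a + 1)‖ ≤ b := by
    intro x hx
    have := (convex_Icc a (a + 1)).norm_image_sub_le_of_norm_hasDerivWithin_le
      (fun y hy => (hφ y hy).hasDerivWithinAt) hb
      (Set.right_mem_Icc.2 (by linarith)) hx
    have hb0 : 0 ≤ b := (norm_nonneg _).trans (hb x hx)
    refine this.trans ?_
    have : ‖x - (a + 1)‖ ≤ 1 := by
      rw [Real.norm_eq_abs, abs_le]; constructor <;> linarith [hx.1, hx.2]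
    nlinarith
  have h2 := (convex_Icc a (a + 1)).norm_image_sub_le_of_norm_hasDerivWithin_le
      (f := fun x : ℝ => G x - x • φ (a + 1)) (f' := fun x => φ x - φ (a + 1)) (C := b)
      (fun y hy => by
        have := ((hG y hy).sub ((hasDerivAt_id y).smul_const (φ (a + 1)))).hasDerivWithinAt
          (s := Set.Icc a (a + 1))
        simpa [Pi.sub_def] using this) h1
      (Set.left_mem_Icc.2 (by linarith)) (Set.right_mem_Icc.2 (by linarith))
  have h3 : (G (a + 1) - (a + 1) • φ (a + 1)) - (G a - a • φ (a + 1))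
      = -(φ (a + 1) - (G (a + 1) - G a)) := by
    simp only [Complex.real_smul]; push_cast; ring
  rw [h3, norm_neg] at h2
  simpa using h2

/-- For `Re s ≥ 1`, the error made on replacing `(n+1)^(-s)` by an integral over `[n, n+1]`. -/
lemma zeta_step {s : ℂ} (hs : 1 ≤ s.re) (hs1 : s ≠ 1) {n : ℕ} (hn : 1 ≤ n) :
    ‖((n + 1 : ℕ) : ℂ) ^ (-s) - (((n + 1 : ℕ) : ℂ) ^ (1 - s) - (n : ℂ) ^ (1 - s)) / (1 - s)‖
      ≤ ‖s‖ / n ^ 2 := by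
  have hn' : (1 : ℝ) ≤ n := by exact_mod_cast hn
  have h1s : (1 - s) ≠ 0 := sub_ne_zero.2 hs1.symm
  have key := tele_bound (a := n) (b := ‖s‖ / n ^ 2)
    (φ := fun x : ℝ => (x : ℂ) ^ (-s)) (G := fun x : ℝ => (x : ℂ) ^ (1 - s) / (1 - s))
    (φ' := fun x : ℝ => (-s) * (x : ℂ) ^ (-s - 1)) ?_ ?_ ?_
  · simp only [Complex.ofReal_add, Complex.ofReal_natCast, Complex.ofReal_one] at key
    push_cast
    rw [sub_div]
    exact key
  · intro x hx
    have hx0 : (0 : ℝ) < x := by linarith [hx.1]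
    have := (hasDerivAt_ofReal_cpow_const hx0.ne' h1s).div_const (1 - s)
    rwa [mul_div_cancel_left₀ _ h1s, show 1 - s - 1 = -s by ring] at this
  · intro x hx
    have hx0 : (0 : ℝ) < x := by linarith [hx.1]
    have hs0 : s ≠ 0 := by rintro rfl; norm_num at hs
    exact hasDerivAt_ofReal_cpow_const hx0.ne' (neg_ne_zero.2 hs0)
  · intro x hx
    have hx0 : (0 : ℝ) < x := by linarith [hx.1]
    have hx1 : (1 : ℝ) ≤ x := by linarith [hx.1]
    rw [norm_mul, norm_neg, Complex.norm_cpow_eq_rpow_re_of_pos hx0, div_eq_mul_inv]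
    gcongr
    calc x ^ (-s - 1).re ≤ x ^ (-2 : ℝ) := by
          apply Real.rpow_le_rpow_of_exponent_le hx1; simp; linarith
      _ = (x ^ 2)⁻¹ := by rw [Real.rpow_neg hx0.le]; norm_num
      _ ≤ _ := by gcongr; exact hx.1

/-- Partial sums of the Dirichlet series of `ζ`. -/
noncomputable def Zs (s : ℂ) (N : ℕ) : ℂ := ∑ n ∈ Icc 1 N, (n : ℂ) ^ (-s)

lemma Zs_succ (s : ℂ) (N : ℕ) : Zs s (N + 1) = Zs s N + ((N + 1 : ℕ) : ℂ) ^ (-s) := by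
  rw [Zs, Zs, Finset.sum_Icc_succ_top (by omega)]

/-- Summing `zeta_step` over `N ≤ n < M`; the differences `1 / N - 1 / M` telescope. -/
lemma Zs_diff {s : ℂ} (hs : 1 ≤ s.re) (hs1 : s ≠ 1) {N : ℕ} (hN : 1 ≤ N) (M : ℕ) (hM : N ≤ M) :
    ‖(Zs s M - (M : ℂ) ^ (1 - s) / (1 - s)) - (Zs s N - (N : ℂ) ^ (1 - s) / (1 - s))‖
      ≤ 2 * ‖s‖ * (1 / N - 1 / M) := by
  induction M, hM using Nat.le_induction with
  | base => simp
  | succ M hM ih =>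
    have hM1 : (1 : ℝ) ≤ M := by exact_mod_cast hN.trans hM
    have h1 := zeta_step hs hs1 (hN.trans hM)
    have h2 : (Zs s (M + 1) - ((M + 1 : ℕ) : ℂ) ^ (1 - s) / (1 - s))
        - (Zs s N - (N : ℂ) ^ (1 - s) / (1 - s))
        = ((Zs s M - (M : ℂ) ^ (1 - s) / (1 - s)) - (Zs s N - (N : ℂ) ^ (1 - s) / (1 - s)))
        + (((M + 1 : ℕ) : ℂ) ^ (-s)
          - (((M + 1 : ℕ) : ℂ) ^ (1 - s) - (M : ℂ) ^ (1 - s)) / (1 - s)) := by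
      rw [Zs_succ]; ring
    rw [h2]
    refine (norm_add_le _ _).trans ((add_le_add ih h1).trans ?_)
    have h3 : ‖s‖ / (M : ℝ) ^ 2 ≤ 2 * ‖s‖ * (1 / M - 1 / (M + 1 : ℕ)) := by
      have : (1 / M - 1 / (M + 1 : ℕ) : ℝ) = 1 / (M * (M + 1)) := by
        push_cast; field_simp; ring
      rw [this, div_eq_mul_inv, mul_assoc, mul_comm 2, mul_assoc]
      gcongr
      rw [div_mul_eq_mul_div, inv_eq_one_div, div_le_div_iff₀ (by positivity) (by positivity)]
      nlinarith
    have := h3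
    nlinarith

lemma zeta_approx_of_one_lt {s : ℂ} (hs : 1 < s.re) {N : ℕ} (hN : 1 ≤ N) :
    ‖riemannZeta s - (Zs s N - (N : ℂ) ^ (1 - s) / (1 - s))‖ ≤ 2 * ‖s‖ / N := by
  have hs1 : s ≠ 1 := by rintro rfl; simp at hs
  have hlim : Tendsto (fun M : ℕ => Zs s M) atTop (nhds (riemannZeta s)) := by
    rw [zeta_eq_tsum_one_div_nat_cpow hs]
    have h := ((Complex.summable_one_div_nat_cpow.2 hs).hasSum.tendsto_sum_nat)
    have h' := h.comp (tendsto_add_atTop_nat 1)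
    refine h'.congr fun M => ?_
    have hs0 : s ≠ 0 := by rintro rfl; norm_num at hs
    simp only [Function.comp, Zs]
    rw [Finset.range_eq_Ico, Finset.sum_eq_sum_Ico_succ_bot (by omega)]
    simp only [Nat.cast_zero, Complex.zero_cpow hs0, div_zero, zero_add]
    refine Finset.sum_congr (by ext; simp) fun n _ => ?_
    rw [Complex.cpow_neg, one_div]
  have hlim2 : Tendsto (fun M : ℕ => (M : ℂ) ^ (1 - s) / (1 - s)) atTop (nhds 0) := by
    rw [tendsto_zero_iff_norm_tendsto_zero]
    have h : Tendsto (fun M : ℕ => (M : ℝ) ^ (-(s.re - 1)) / ‖1 - s‖) atTop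
        (nhds (0 / ‖1 - s‖)) :=
      ((tendsto_rpow_neg_atTop (by linarith)).comp tendsto_natCast_atTop_atTop).div_const _
    rw [zero_div] at h
    refine h.congr' ?_
    filter_upwards [eventually_ge_atTop 1] with M hM
    rw [norm_div, Complex.norm_natCast_cpow_of_pos (by omega)]
    congr 2; simp
  have hl := ((hlim.sub hlim2).sub_const (Zs s N - (N : ℂ) ^ (1 - s) / (1 - s))).norm
  rw [sub_zero] at hl
  refine le_of_tendsto hl ?_
  filter_upwards [eventually_ge_atTop N] with M hM
  refine (Zs_diff hs.le hs1 hN M hM).trans ?_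
  rw [div_eq_mul_one_div (2 * ‖s‖)]
  have : (0 : ℝ) ≤ 1 / M := by positivity
  have h0 : 0 ≤ 2 * ‖s‖ := by positivity
  nlinarith

/-- Approximation of `ζ(s)` by a partial sum, uniformly up to the line `Re s = 1`. -/
lemma zeta_approx {s : ℂ} (hs : 1 ≤ s.re) (hs1 : s ≠ 1) {N : ℕ} (hN : 1 ≤ N) :
    ‖riemannZeta s - (Zs s N - (N : ℂ) ^ (1 - s) / (1 - s))‖ ≤ 2 * ‖s‖ / N := by
  have hN0 : (N : ℂ) ≠ 0 := by exact_mod_cast (by omega : N ≠ 0)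
  -- both sides are continuous at `s`, so the bound passes to the boundary line
  set γ : ℝ → ℂ := fun ε => s + ε
  have hγ : Tendsto γ (nhdsWithin 0 (Set.Ioi 0)) (nhds s) := by
    have : Continuous γ := by fun_prop
    have h := (this.tendsto 0).mono_left (nhdsWithin_le_nhds (s := Set.Ioi 0))
    simpa [γ] using h
  have hc1 : ContinuousAt riemannZeta s := (differentiableAt_riemannZeta hs1).continuousAt
  have h1s : (1 - s) ≠ 0 := sub_ne_zero.2 hs1.symm
  have hc2 : ContinuousAt (fun z => Zs z N - (N : ℂ) ^ (1 - z) / (1 - z)) s := by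
    have hZ : ContinuousAt (fun z => Zs z N) s := by
      unfold Zs
      refine tendsto_finsetSum _ fun n hn => ?_
      have : (n : ℂ) ≠ 0 := by
        have := (Finset.mem_Icc.1 hn).1
        exact_mod_cast (by omega : n ≠ 0)
      exact (continuousAt_const_cpow this).comp continuousAt_neg
    refine hZ.sub (ContinuousAt.div ?_ (by fun_prop) h1s)
    exact (continuousAt_const_cpow hN0).comp (f := fun z => 1 - z) (by fun_prop)
  have hl := ((hc1.tendsto.comp hγ).sub (hc2.tendsto.comp hγ)).norm
  have hr : Tendsto (fun ε => 2 * ‖γ ε‖ / N) (nhdsWithin 0 (Set.Ioi 0)) (nhds (2 * ‖s‖ / N)) :=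
    (hγ.norm.const_mul 2).div_const _
  refine le_of_tendsto_of_tendsto hl hr ?_
  filter_upwards [self_mem_nhdsWithin] with ε hε
  exact zeta_approx_of_one_lt (by simp [γ]; have : (0:ℝ) < ε := hε; linarith) hN

lemma norm_natCast_cpow_le {n : ℕ} (hn : 1 ≤ n) {s : ℂ} (hs : 1 ≤ s.re) :
    ‖(n : ℂ) ^ (-s)‖ ≤ (n : ℝ)⁻¹ := by
  rw [Complex.norm_natCast_cpow_of_pos (by omega), ← Real.rpow_neg_one]
  exact Real.rpow_le_rpow_of_exponent_le (by exact_mod_cast hn) (by simpa using hs)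

lemma sum_inv_le (N : ℕ) : ∑ n ∈ Icc 1 N, (n : ℝ)⁻¹ ≤ 1 + Real.log N := by
  have := harmonic_le_one_add_log N
  simpa [harmonic_eq_sum_Icc] using this

lemma norm_Zs_le {s : ℂ} (hs : 1 ≤ s.re) (N : ℕ) : ‖Zs s N‖ ≤ 1 + Real.log N :=
  (norm_sum_le _ _).trans ((Finset.sum_le_sum fun _ hn =>
    norm_natCast_cpow_le (Finset.mem_Icc.1 hn).1 hs).trans (sum_inv_le N))

/-- A truncation point `N ≍ R²`; for `R = |τ|` the tail of `ζ(1 + iτ)` beyond it is negligible. -/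
lemma exists_cut {R : ℝ} (hR : 1 ≤ R) : ∃ N : ℕ, 1 ≤ N ∧ R ^ 2 ≤ N ∧
    Real.log N ≤ 1 + 2 * Real.log R := by
  refine ⟨⌈R ^ 2⌉₊, Nat.one_le_ceil_iff.2 (by positivity), Nat.le_ceil _, ?_⟩
  have h1 : (⌈R ^ 2⌉₊ : ℝ) ≤ 2 * R ^ 2 := by
    have := (Nat.ceil_lt_add_one (show 0 ≤ R ^ 2 by positivity)).le
    nlinarith
  have hpos : (0 : ℝ) < ⌈R ^ 2⌉₊ := by exact_mod_cast Nat.ceil_pos.2 (by positivity)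
  calc Real.log ⌈R ^ 2⌉₊ ≤ Real.log (2 * R ^ 2) := Real.log_le_log hpos h1
    _ = Real.log 2 + 2 * Real.log R := by
        rw [Real.log_mul (by norm_num) (by positivity), Real.log_pow]; norm_num
    _ ≤ _ := by linarith [Real.log_two_lt_d9]

lemma norm_tail_le {s : ℂ} (hs : 1 ≤ s.re) {R : ℝ} (hR : 1 ≤ R) (hR' : R ≤ ‖1 - s‖)
    {N : ℕ} (hN : 1 ≤ N) : ‖(N : ℂ) ^ (1 - s) / (1 - s)‖ ≤ 1 / R := by
  rw [norm_div, Complex.norm_natCast_cpow_of_pos (by omega)]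
  have : (N : ℝ) ^ (1 - s).re ≤ 1 :=
    Real.rpow_le_one_of_one_le_of_nonpos (by exact_mod_cast hN) (by simpa using hs)
  gcongr

lemma norm_one_sub_line (σ τ : ℝ) : |τ| ≤ ‖1 - (1 + σ + τ * Complex.I)‖ := by
  have := Complex.abs_im_le_norm (1 - (1 + σ + τ * Complex.I))
  simpa using this

lemma norm_line_le {σ τ : ℝ} (h0 : 0 ≤ σ) (h1 : σ ≤ 1) :
    ‖(1 + σ + τ * Complex.I : ℂ)‖ ≤ 2 + |τ| := by
  calc ‖(1 + σ + τ * Complex.I : ℂ)‖ ≤ ‖(1 + σ : ℂ)‖ + ‖τ * Complex.I‖ := norm_add_le _ _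
    _ = |1 + σ| + |τ| := by
      congr 1
      · rw [← Real.norm_eq_abs, ← Complex.norm_real]; simp
      · simp
    _ ≤ _ := by rw [abs_of_nonneg (by linarith)]; linarith

lemma zeta_upper {σ τ : ℝ} (h0 : 0 ≤ σ) (h1 : σ ≤ 1) (hτ : 1 ≤ |τ|) :
    ‖riemannZeta (1 + σ + τ * Complex.I)‖ ≤ 9 + 2 * Real.log |τ| := by
  set s : ℂ := 1 + σ + τ * Complex.I with hs
  have hre : 1 ≤ s.re := by simp [hs, h0]
  obtain ⟨N, hN, hN2, hlog⟩ := exists_cut hτ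
  have hR' := norm_one_sub_line σ τ
  have hs1 : s ≠ 1 := by
    intro h; rw [← hs, h] at hR'; simp at hR'; rw [hR'] at hτ; norm_num at hτ
  have hN0 : (0 : ℝ) < N := by exact_mod_cast hN
  have a := zeta_approx hre hs1 hN
  have b := norm_Zs_le hre N
  have c := norm_tail_le hre hτ hR' hN
  have d : 2 * ‖s‖ / N ≤ 6 := by
    rw [div_le_iff₀ hN0]
    have := norm_line_le (τ := τ) h0 h1
    nlinarith
  have e : 1 / |τ| ≤ 1 := by rw [div_le_one (by linarith)]; exact hτ
  have key : riemannZeta s = (riemannZeta s - (Zs s N - (N : ℂ) ^ (1 - s) / (1 - s)))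
    + Zs s N - (N : ℂ) ^ (1 - s) / (1 - s) := by ring
  rw [key]
  refine (norm_sub_le _ _).trans ((add_le_add_left (norm_add_le _ _) _).trans ?_)
  linarith

/-- Moving from `1 + σ + iτ` to `1 + iτ` changes `ζ` by `O(σ log² |τ| + 1 / |τ|)`: the partial
sums up to `N ≍ τ²` are compared term by term. -/
lemma zeta_near {σ τ : ℝ} (h0 : 0 ≤ σ) (h1 : σ ≤ 1) (hτ : 1 ≤ |τ|) :
    ‖riemannZeta (1 + σ + τ * Complex.I)‖ ≤ ‖riemannZeta (1 + τ * Complex.I)‖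
      + σ * (2 + 2 * Real.log |τ|) ^ 2 + 14 / |τ| := by
  set s : ℂ := 1 + σ + τ * Complex.I with hs
  set z : ℂ := 1 + (0 : ℝ) + τ * Complex.I with hz
  have hz' : (1 + τ * Complex.I : ℂ) = z := by simp [hz]
  rw [hz']
  have hre : 1 ≤ s.re := by simp [hs, h0]
  have hrez : 1 ≤ z.re := by simp [hz]
  obtain ⟨N, hN, hN2, hlog⟩ := exists_cut hτ
  have hR' := norm_one_sub_line σ τ
  have hR'z := norm_one_sub_line 0 τ
  have hs1 : s ≠ 1 := by
    intro h; rw [← hs, h] at hR'; simp at hR'; rw [hR'] at hτ; norm_num at hτ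
  have hz1 : z ≠ 1 := by
    intro h; rw [← hz, h] at hR'z; simp at hR'z; rw [hR'z] at hτ; norm_num at hτ
  have hN0 : (0 : ℝ) < N := by exact_mod_cast hN
  have a := zeta_approx hre hs1 hN
  have a' := zeta_approx hrez hz1 hN
  have c := norm_tail_le hre hτ hR' hN
  have c' := norm_tail_le hrez hτ hR'z hN
  have hτ0 : 0 < |τ| := by linarith
  have d0 : ∀ x : ℝ, x ≤ 2 + |τ| → 2 * x / N ≤ 6 / |τ| := by
    intro x hx
    rw [div_le_div_iff₀ hN0 hτ0]
    nlinarith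
  have d := d0 _ (norm_line_le (τ := τ) h0 h1)
  have d' := d0 _ (norm_line_le (τ := τ) le_rfl zero_le_one)
  have b : ‖Zs s N - Zs z N‖ ≤ σ * (2 + 2 * Real.log |τ|) ^ 2 := by
    have hl0 : 0 ≤ Real.log N := Real.log_natCast_nonneg N
    have : ‖Zs s N - Zs z N‖ ≤ ∑ n ∈ Icc 1 N, σ * Real.log N * (n : ℝ)⁻¹ := by
      rw [Zs, Zs, ← Finset.sum_sub_distrib]
      refine (norm_sum_le _ _).trans (Finset.sum_le_sum fun n hn => ?_)
      obtain ⟨hn1, hnN⟩ := Finset.mem_Icc.1 hn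
      have hn0 : (n : ℂ) ≠ 0 := by exact_mod_cast (by omega : n ≠ 0)
      have hn0' : (0 : ℝ) < n := by exact_mod_cast hn1
      have e1 : (n : ℂ) ^ (-s) - (n : ℂ) ^ (-z)
          = (n : ℂ) ^ (-z) * (((n : ℝ) ^ (-σ) - 1 : ℝ) : ℂ) := by
        have : -s = -z + ((-σ : ℝ) : ℂ) := by simp [hs, hz]; ring
        rw [this, Complex.cpow_add _ _ hn0, Complex.ofReal_sub, Complex.ofReal_cpow hn0'.le]
        simp; ring
      rw [e1, norm_mul, Complex.norm_real, mul_comm]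
      gcongr
      · have hp : (n : ℝ) ^ (-σ) ≤ 1 :=
          Real.rpow_le_one_of_one_le_of_nonpos (by exact_mod_cast hn1) (by linarith)
        rw [Real.norm_eq_abs, abs_of_nonpos (by linarith)]
        rw [Real.rpow_def_of_pos hn0']
        have h2 := Real.add_one_le_exp (Real.log n * -σ)
        have h3 : Real.log n ≤ Real.log N := Real.log_le_log hn0' (by exact_mod_cast hnN)
        nlinarith
      · exact norm_natCast_cpow_le hn1 hrez
    refine this.trans ?_
    rw [← Finset.mul_sum, mul_assoc]
    gcongr
    have := sum_inv_le N
    have : Real.log N * ∑ n ∈ Icc 1 N, (n : ℝ)⁻¹ ≤ Real.log N * (1 + Real.log N) := by gcongr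
    nlinarith
  have key : riemannZeta s = riemannZeta z
    + (riemannZeta s - (Zs s N - (N : ℂ) ^ (1 - s) / (1 - s)))
    - (riemannZeta z - (Zs z N - (N : ℂ) ^ (1 - z) / (1 - z)))
    + (Zs s N - Zs z N) - (N : ℂ) ^ (1 - s) / (1 - s) + (N : ℂ) ^ (1 - z) / (1 - z) := by ring
  have tri : ∀ A B C D E F : ℂ, ‖A + B - C + D - E + F‖ ≤ ‖A‖ + ‖B‖ + ‖C‖ + ‖D‖ + ‖E‖ + ‖F‖ := by
    intro A B C D E F
    have h1 := norm_add_le (A + B - C + D - E) F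
    have h2 := norm_sub_le (A + B - C + D) E
    have h3 := norm_add_le (A + B - C) D
    have h4 := norm_sub_le (A + B) C
    have h5 := norm_add_le A B
    linarith
  rw [key]
  refine (tri _ _ _ _ _ _).trans ?_
  have : 14 / |τ| = 6 / |τ| + 6 / |τ| + 1 / |τ| + 1 / |τ| := by ring
  linarith

lemma zeta_real_upper {σ : ℝ} (h0 : 0 < σ) (h1 : σ ≤ 1) :
    ‖riemannZeta (1 + σ)‖ ≤ 6 / σ := by
  have hre : 1 < (1 + σ : ℂ).re := by simp [h0]
  have a := zeta_approx_of_one_lt hre le_rfl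
  have e : Zs (1 + σ) 1 - ((1 : ℕ) : ℂ) ^ (1 - (1 + σ : ℂ)) / (1 - (1 + σ)) = ((1 + 1 / σ : ℝ) : ℂ) := by
    simp [Zs]
  rw [e] at a
  have n1 : ‖((1 + 1 / σ : ℝ) : ℂ)‖ = 1 + 1 / σ := by
    rw [Complex.norm_real, Real.norm_of_nonneg (by positivity)]
  have n2 : ‖(1 + σ : ℂ)‖ = 1 + σ := by
    rw [← Complex.ofReal_one, ← Complex.ofReal_add, Complex.norm_real,
      Real.norm_of_nonneg (by positivity)]
  have h3 := norm_sub_norm_le (riemannZeta (1 + σ)) ((1 + 1 / σ : ℝ) : ℂ)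
  rw [n2] at a
  have h4 : 1 ≤ 1 / σ := by rw [le_div_iff₀ h0]; linarith
  have : 6 / σ = 6 * (1 / σ) := by ring
  norm_num at a
  rw [this]; rw [n1] at h3
  norm_num at h3
  norm_num at h4 ⊢
  linarith

/-- The inequality behind the nonvanishing of `ζ` on `Re s = 1`, from
`3 + 4 cos θ + cos 2θ ≥ 0`. -/
lemma three_four_one {σ : ℝ} (h0 : 0 < σ) (τ : ℝ) :
    1 ≤ ‖riemannZeta (1 + σ)‖ ^ 3 * ‖riemannZeta (1 + σ + τ * Complex.I)‖ ^ 4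
      * ‖riemannZeta (1 + σ + (2 * τ : ℝ) * Complex.I)‖ := by
  have h := DirichletCharacter.norm_LFunction_product_ge_one (N := 1) 1 h0 τ
  rw [DirichletCharacter.LFunctionTrivChar, one_pow] at h
  simp only [DirichletCharacter.LFunction_modOne_eq, norm_mul, norm_pow] at h
  have e1 : (1 + σ + Complex.I * τ : ℂ) = 1 + σ + τ * Complex.I := by ring
  have e2 : (1 + σ + 2 * Complex.I * τ : ℂ) = 1 + σ + (2 * τ : ℝ) * Complex.I := by
    push_cast; ring
  rw [e1, e2] at h
  exact h

/-- A weak lower bound for `ζ` on `Re s = 1`, from `three_four_one` and the upper bounds at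
`σ = |τ|^(-1/2)`. -/
lemma zeta_lower_large : ∃ T : ℝ, 1 ≤ T ∧ ∀ τ : ℝ, T ≤ |τ| →
    1 / √|τ| ≤ ‖riemannZeta (1 + τ * Complex.I)‖ := by
  have ho := Real.isLittleO_pow_log_id_atTop (n := 18)
  set K : ℝ := 216 * 3 * 6 ^ 4 with hK
  have hev := ho.bound (show (0 : ℝ) < 1 / (2 * K ^ 2) by positivity)
  obtain ⟨T₁, hT₁⟩ := eventually_atTop.1 (hev.and (Real.tendsto_log_atTop.eventually_ge_atTop 20))
  refine ⟨max T₁ 1, le_max_right _ _, fun τ hτ => ?_⟩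
  set R := |τ| with hR
  have hR1 : 1 ≤ R := (le_max_right _ _).trans hτ
  obtain ⟨hb, hl⟩ := hT₁ R ((le_max_left _ _).trans hτ)
  set l := Real.log R with hlR
  have hR0 : 0 < R := by linarith
  set q := √R with hq
  have hq1 : 1 ≤ q := Real.one_le_sqrt.2 hR1
  have hq0 : 0 < q := by linarith
  have hqq : q * q = R := Real.mul_self_sqrt hR0.le
  by_contra! hcon
  have hσ0 : 0 < 1 / q := by positivity
  have hσ1 : 1 / q ≤ 1 := by rw [div_le_one hq0]; exact hq1
  have h341 := three_four_one hσ0 τ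
  have u1 := zeta_real_upper hσ0 hσ1
  have u2 := zeta_near (τ := τ) hσ0.le hσ1 hR1
  have u3 := zeta_upper (τ := 2 * τ) hσ0.le hσ1 (by rw [abs_mul]; norm_num; linarith)
  have hlog2 : Real.log |2 * τ| ≤ 1 + l := by
    rw [abs_mul, Real.log_mul (by norm_num) (by rw [← hR]; exact hR0.ne')]
    rw [abs_two]
    linarith [Real.log_two_lt_d9]
  set ζ1 := ‖riemannZeta (1 + ((1 / q : ℝ) : ℂ))‖
  set ζ2 := ‖riemannZeta (1 + ((1 / q : ℝ) : ℂ) + τ * Complex.I)‖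
  set ζ3 := ‖riemannZeta (1 + ((1 / q : ℝ) : ℂ) + (2 * τ : ℝ) * Complex.I)‖
  have v1 : ζ1 ≤ 6 * q := by
    refine u1.trans (le_of_eq ?_); field_simp
  have v3 : ζ3 ≤ 3 * l := by linarith
  have v2 : ζ2 ≤ 6 * l ^ 2 / q := by
    have e : 14 / R ≤ 14 / q := by
      gcongr; nlinarith
    have : ζ2 ≤ (1 + (2 + 2 * l) ^ 2 + 14) / q := by
      refine u2.trans ?_
      rw [add_div, add_div, div_eq_mul_one_div ((2 + 2 * l) ^ 2)]
      linarith
    refine this.trans ?_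
    gcongr
    nlinarith
  have hz1 : 0 ≤ ζ1 := norm_nonneg _
  have hz2 : 0 ≤ ζ2 := norm_nonneg _
  have hz3 : 0 ≤ ζ3 := norm_nonneg _
  have w : 1 ≤ (6 * q) ^ 3 * (6 * l ^ 2 / q) ^ 4 * (3 * l) := by
    refine h341.trans ?_
    gcongr
  have w2 : (6 * q) ^ 3 * (6 * l ^ 2 / q) ^ 4 * (3 * l) = K * l ^ 9 / q := by
    rw [hK]; field_simp; norm_num
  rw [w2, le_div_iff₀ hq0, one_mul] at w
  have w3 : R ≤ (K * l ^ 9) ^ 2 := by rw [← hqq]; nlinarith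
  rw [id, Real.norm_of_nonneg hR0.le, Real.norm_of_nonneg (by positivity)] at hb
  have : (K * l ^ 9) ^ 2 = K ^ 2 * l ^ 18 := by ring
  have hKp : 0 < K := by positivity
  have : K ^ 2 * l ^ 18 ≤ R / 2 := by
    calc K ^ 2 * l ^ 18 ≤ K ^ 2 * (1 / (2 * K ^ 2) * R) := by gcongr
      _ = R / 2 := by field_simp
  linarith

/-- For `|τ|` in a compact set the lower bound follows from `ζ(1 + iτ) ≠ 0` and continuity. -/
lemma zeta_lower {t₀ : ℝ} (ht : 0 < t₀) : ∃ c : ℝ, 0 < c ∧ ∀ τ : ℝ, t₀ ≤ |τ| →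
    c / √|τ| ≤ ‖riemannZeta (1 + τ * Complex.I)‖ := by
  obtain ⟨T, hT1, hT⟩ := zeta_lower_large
  set S : Set ℝ := {τ | t₀ ≤ |τ|} ∩ Set.Icc (-T) T with hS
  have hScomp : IsCompact S := by
    refine isCompact_Icc.inter_left ?_
    exact isClosed_le continuous_const continuous_abs
  have hcont : ContinuousOn (fun τ : ℝ => ‖riemannZeta (1 + τ * Complex.I)‖ * √|τ|) S := by
    intro τ hτ
    have hne : (1 + τ * Complex.I : ℂ) ≠ 1 := by
      intro h
      have h0 : τ = 0 := by simpa using h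
      have := hτ.1
      simp [h0] at this; linarith
    have h1 : ContinuousAt (fun τ : ℝ => riemannZeta (1 + τ * Complex.I)) τ :=
      ContinuousAt.comp (f := fun τ : ℝ => (1 + τ * Complex.I : ℂ))
        (differentiableAt_riemannZeta hne).continuousAt (by fun_prop)
    exact (h1.norm.mul (by fun_prop)).continuousWithinAt
  have hpos : ∀ τ ∈ S, 0 < ‖riemannZeta (1 + τ * Complex.I)‖ * √|τ| := by
    intro τ hτ
    have : 0 < |τ| := lt_of_lt_of_le ht hτ.1
    have := riemannZeta_ne_zero_of_one_le_re (s := 1 + τ * Complex.I) (by simp)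
    positivity
  have : ∃ c : ℝ, 0 < c ∧ ∀ τ ∈ S, c ≤ ‖riemannZeta (1 + τ * Complex.I)‖ * √|τ| := by
    rcases S.eq_empty_or_nonempty with h | h
    · exact ⟨1, one_pos, by simp [h]⟩
    · obtain ⟨τ₁, hτ₁, hmin⟩ := hScomp.exists_isMinOn h hcont
      exact ⟨_, hpos τ₁ hτ₁, fun τ hτ => hmin hτ⟩
  obtain ⟨c, hc, hcS⟩ := this
  refine ⟨min c 1, by positivity, fun τ hτ => ?_⟩
  have h0 : 0 < |τ| := lt_of_lt_of_le ht hτ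
  by_cases h : |τ| ≤ T
  · rw [div_le_iff₀ (by positivity)]
    exact (min_le_left _ _).trans (hcS τ ⟨hτ, abs_le.1 h⟩)
  · refine le_trans ?_ (hT τ (not_le.1 h).le)
    gcongr
    exact min_le_right _ _

/-! ### Mertens' theorem -/

open scoped ArithmeticFunction.vonMangoldt

/-- Summation of a Dirichlet convolution over `n ≤ N`, grouped by the first factor. -/
lemma sum_conv {R : Type*} [Semiring R] (a b : ℕ → R) (N : ℕ) :
    ∑ n ∈ Icc 1 N, ∑ x ∈ n.divisorsAntidiagonal, a x.1 * b x.2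
      = ∑ d ∈ Icc 1 N, a d * ∑ m ∈ Icc 1 (N / d), b m := by
  let A : ArithmeticFunction R := ⟨fun n => if n = 0 then 0 else a n, by simp⟩
  let B : ArithmeticFunction R := ⟨fun n => if n = 0 then 0 else b n, by simp⟩
  have hA : ∀ n, n ≠ 0 → A n = a n := fun n hn => by simp [A, hn]
  have hB : ∀ n, n ≠ 0 → B n = b n := fun n hn => by simp [B, hn]
  have h := ArithmeticFunction.sum_Ioc_mul_eq_sum_sum A B N
  have hI : ∀ N : ℕ, Ioc 0 N = Icc 1 N := fun N => by ext; simp; omega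
  simp only [hI] at h
  calc _ = ∑ n ∈ Icc 1 N, (A * B) n := by
        refine sum_congr rfl fun n _ => ?_
        rw [ArithmeticFunction.mul_apply]
        refine sum_congr rfl fun x hx => ?_
        obtain ⟨h1, h2⟩ := Nat.mem_divisorsAntidiagonal.1 hx
        rw [← h1] at h2
        rw [hA _ (left_ne_zero_of_mul h2), hB _ (right_ne_zero_of_mul h2)]
    _ = _ := by
        rw [h]
        refine sum_congr rfl fun d hd => ?_
        rw [hA _ (by have := (mem_Icc.1 hd).1; omega)]
        congr 1
        exact sum_congr rfl fun m hm => hB _ (by have := (mem_Icc.1 hm).1; omega)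

lemma sum_vonMangoldt_le (N : ℕ) : ∑ n ∈ Icc 1 N, Λ n ≤ 6 * N := by
  have h := Chebyshev.psi_le_const_mul_self (x := N) (by positivity)
  rw [Chebyshev.psi, Nat.floor_natCast] at h
  have hI : Ioc 0 N = Icc 1 N := by ext; simp; omega
  rw [hI] at h
  refine h.trans ?_
  gcongr
  have : Real.log 4 = 2 * Real.log 2 := by
    rw [show (4 : ℝ) = 2 ^ 2 by norm_num, Real.log_pow]; norm_num
  linarith [Real.log_two_lt_d9]

lemma sum_antidiag_vonMangoldt (n : ℕ) :
    ∑ x ∈ n.divisorsAntidiagonal, Λ x.1 = Real.log n := by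
  rw [← ArithmeticFunction.vonMangoldt_sum (n := n), Nat.sum_divisorsAntidiagonal (fun i _ => Λ i)]

lemma sum_log_eq (N : ℕ) : ∑ n ∈ Icc 1 N, Real.log n
    = ∑ d ∈ Icc 1 N, Λ d * ((N / d : ℕ) : ℝ) := by
  have h := sum_conv (fun d => Λ d) (fun _ => (1 : ℝ)) N
  simp only [mul_one, sum_const, Nat.card_Icc, add_tsub_cancel_right, nsmul_eq_mul] at h
  rw [← h]
  exact sum_congr rfl fun n _ => (sum_antidiag_vonMangoldt n).symm

lemma sum_log_ge {N : ℕ} (hN : 1 ≤ N) : N * Real.log N - N ≤ ∑ n ∈ Icc 1 N, Real.log n := by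
  induction N, hN using Nat.le_induction with
  | base => simp
  | succ N hN ih =>
    rw [Finset.sum_Icc_succ_top (by omega)]
    have hN0 : (0 : ℝ) < N := by exact_mod_cast hN
    have h1 : Real.log ((N + 1 : ℕ) : ℝ) ≤ Real.log N + 1 / N := by
      have e : ((N + 1 : ℕ) : ℝ) = N * (1 + 1 / N) := by push_cast; field_simp
      rw [e, Real.log_mul hN0.ne' (by positivity)]
      have := Real.log_le_sub_one_of_pos (show (0 : ℝ) < 1 + 1 / N by positivity)
      linarith
    have h2 : (N : ℝ) * Real.log ((N + 1 : ℕ) : ℝ) ≤ N * Real.log N + 1 := by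
      have := mul_le_mul_of_nonneg_left h1 hN0.le
      rw [mul_add, mul_one_div_cancel hN0.ne'] at this
      exact this
    push_cast at h2 ⊢
    linarith

/-- Mertens' first theorem with an explicit constant. -/
lemma mertens {N : ℕ} (hN : 1 ≤ N) : |∑ n ∈ Icc 1 N, Λ n / n - Real.log N| ≤ 6 := by
  have hN0 : (0 : ℝ) < N := by exact_mod_cast hN
  have e : (N : ℝ) * ∑ n ∈ Icc 1 N, Λ n / n = ∑ n ∈ Icc 1 N, Λ n * (N / n) := by
    rw [mul_sum]; exact sum_congr rfl fun n _ => by ring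
  have lo : ∑ n ∈ Icc 1 N, Real.log n ≤ N * ∑ n ∈ Icc 1 N, Λ n / n := by
    rw [sum_log_eq, e]
    refine sum_le_sum fun n _ => ?_
    gcongr
    exact Nat.cast_div_le
  have hi : N * ∑ n ∈ Icc 1 N, Λ n / n ≤ ∑ n ∈ Icc 1 N, Real.log n + 6 * N := by
    rw [sum_log_eq, e]
    refine le_trans ?_ (add_le_add_right (sum_vonMangoldt_le N) _)
    rw [← sum_add_distrib]
    refine sum_le_sum fun n hn => ?_
    have hn1 := (mem_Icc.1 hn).1
    have : (N : ℝ) / n ≤ ((N / n : ℕ) : ℝ) + 1 := by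
      rw [← Nat.floor_div_eq_div (K := ℝ)]
      exact (Nat.lt_floor_add_one _).le
    have := mul_le_mul_of_nonneg_left this (ArithmeticFunction.vonMangoldt_nonneg (n := n))
    linarith
  have up : ∑ n ∈ Icc 1 N, Real.log n ≤ N * Real.log N := by
    calc _ ≤ ∑ n ∈ Icc 1 N, Real.log N := sum_le_sum fun n hn => by
          have := mem_Icc.1 hn
          exact Real.log_le_log (by exact_mod_cast this.1) (by exact_mod_cast this.2)
      _ = _ := by simp
  have dn := sum_log_ge hN
  rw [abs_le]
  constructor
  · have : N * (Real.log N - 1) ≤ N * ∑ n ∈ Icc 1 N, Λ n / n := by linarith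
    have := le_of_mul_le_mul_left this hN0
    linarith
  · have : N * ∑ n ∈ Icc 1 N, Λ n / n ≤ N * (Real.log N + 6) := by linarith
    have := le_of_mul_le_mul_left this hN0
    linarith

/-! ### Twisted von Mangoldt sums -/

/-- The twisted von Mangoldt sum `∑_{n ≤ N} Λ(n) n^{-1-iτ}`. -/
noncomputable def Sv (τ : ℝ) (N : ℕ) : ℂ :=
  ∑ n ∈ Icc 1 N, (Λ n : ℂ) * (n : ℂ) ^ (-(1 + τ * Complex.I))

/-- Comparison of `∑ log n · n^{-s}` with its integral, one step. -/
lemma log_step {s : ℂ} (hs : s.re = 1) (hs1 : s ≠ 1) {n : ℕ} (hn : 1 ≤ n) :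
    ‖(Real.log (n + 1 : ℕ) : ℂ) * ((n + 1 : ℕ) : ℂ) ^ (-s)
      - (((Real.log (n + 1 : ℕ) : ℂ) * ((n + 1 : ℕ) : ℂ) ^ (1 - s) / (1 - s)
          - ((n + 1 : ℕ) : ℂ) ^ (1 - s) / (1 - s) ^ 2)
        - ((Real.log n : ℂ) * (n : ℂ) ^ (1 - s) / (1 - s) - (n : ℂ) ^ (1 - s) / (1 - s) ^ 2))‖
      ≤ 3 * ‖s‖ * (n : ℝ) ^ (-(3 / 2) : ℝ) := by
  have hn' : (1 : ℝ) ≤ n := by exact_mod_cast hn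
  have h1s : (1 - s) ≠ 0 := sub_ne_zero.2 hs1.symm
  have hs0 : s ≠ 0 := by rintro rfl; norm_num at hs
  have hsn : 1 ≤ ‖s‖ := by
    have := Complex.abs_re_le_norm s
    rwa [hs, abs_one] at this
  have hlogd : ∀ x : ℝ, 0 < x → HasDerivAt (fun x : ℝ => (Real.log x : ℂ)) ((x⁻¹ : ℝ) : ℂ) x :=
    fun x hx => (Real.hasDerivAt_log hx.ne').ofReal_comp
  have hpow : ∀ x : ℝ, 0 < x → ∀ z : ℂ, z ≠ 0 →
      HasDerivAt (fun x : ℝ => (x : ℂ) ^ z) (z * (x : ℂ) ^ (z - 1)) x :=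
    fun x hx z hz => hasDerivAt_ofReal_cpow_const hx.ne' hz
  have hinv : ∀ x : ℝ, 0 < x → ∀ z : ℂ, ((x⁻¹ : ℝ) : ℂ) * (x : ℂ) ^ z = (x : ℂ) ^ (z - 1) := by
    intro x hx z
    rw [Complex.cpow_sub _ _ (by exact_mod_cast hx.ne'), Complex.cpow_one]
    push_cast; ring
  have key := tele_bound (a := n) (b := 3 * ‖s‖ * (n : ℝ) ^ (-(3 / 2) : ℝ))
    (φ := fun x : ℝ => (Real.log x : ℂ) * (x : ℂ) ^ (-s))
    (G := fun x : ℝ => (Real.log x : ℂ) * (x : ℂ) ^ (1 - s) / (1 - s)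
      - (x : ℂ) ^ (1 - s) / (1 - s) ^ 2)
    (φ' := fun x : ℝ => ((1 : ℂ) - s * (Real.log x : ℂ)) * (x : ℂ) ^ (-s - 1)) ?_ ?_ ?_
  · simp only [Complex.ofReal_add, Complex.ofReal_natCast, Complex.ofReal_one] at key
    simp only [Nat.cast_add, Nat.cast_one]
    exact key
  · intro x hx
    have hx0 : (0 : ℝ) < x := by linarith [hx.1]
    have := (((hlogd x hx0).mul (hpow x hx0 _ h1s)).div_const (1 - s)).sub
      ((hpow x hx0 _ h1s).div_const ((1 - s) ^ 2))
    refine this.congr_deriv ?_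
    rw [hinv x hx0, show 1 - s - 1 = -s by ring]
    field_simp
    ring
  · intro x hx
    have hx0 : (0 : ℝ) < x := by linarith [hx.1]
    have := (hlogd x hx0).mul (hpow x hx0 _ (neg_ne_zero.2 hs0))
    refine this.congr_deriv ?_
    rw [hinv x hx0]
    ring
  · intro x hx
    have hx0 : (0 : ℝ) < x := by linarith [hx.1]
    have hx1 : (1 : ℝ) ≤ x := by linarith [hx.1]
    have hl0 : 0 ≤ Real.log x := Real.log_nonneg hx1
    have hlog : 1 + Real.log x ≤ 2 * √x := by
      have h := Real.log_le_sub_one_of_pos (Real.sqrt_pos.2 hx0)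
      rw [Real.log_sqrt hx0.le] at h
      linarith
    have e1 : ‖(1 : ℂ) - s * (Real.log x : ℂ)‖ ≤ 3 * ‖s‖ * √x := by
      calc _ ≤ ‖(1 : ℂ)‖ + ‖s * (Real.log x : ℂ)‖ := norm_sub_le _ _
        _ = 1 + ‖s‖ * Real.log x := by
            rw [norm_mul, Complex.norm_real, Real.norm_of_nonneg hl0]; simp
        _ ≤ ‖s‖ * (1 + Real.log x) := by linarith
        _ ≤ ‖s‖ * (2 * √x) := by gcongr
        _ ≤ _ := by nlinarith [Real.sqrt_nonneg x]
    rw [norm_mul, Complex.norm_cpow_eq_rpow_re_of_pos hx0]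
    have e2 : (-s - 1).re = -2 := by simp [hs]; norm_num
    rw [e2]
    calc _ ≤ 3 * ‖s‖ * √x * x ^ (-2 : ℝ) := by gcongr
      _ = 3 * ‖s‖ * x ^ (-(3 / 2) : ℝ) := by
          rw [Real.sqrt_eq_rpow, mul_assoc, ← Real.rpow_add hx0]; norm_num
      _ ≤ _ := by
          gcongr 3 * ‖s‖ * ?_
          exact Real.rpow_le_rpow_of_nonpos (by linarith) hx.1 (by norm_num)

/-- Partial sums of `-ζ'(1 + iτ)`: the main term is the boundary term of the integral of
`log x · x^{-1-iτ}`. -/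
lemma sum_log_cpow : ∃ C : ℝ, 0 < C ∧ ∀ τ : ℝ, τ ≠ 0 → ∀ N : ℕ, 1 ≤ N →
    ‖∑ n ∈ Icc 1 N, (Real.log n : ℂ) * (n : ℂ) ^ (-(1 + τ * Complex.I))
      - (Real.log N : ℂ) * ((N : ℂ) ^ (-(τ * Complex.I)) / (-(τ * Complex.I)))‖
      ≤ C * (1 + |τ|) + 2 / τ ^ 2 := by
  have hsum : Summable fun n : ℕ => (n : ℝ) ^ (-(3 / 2) : ℝ) :=
    Real.summable_nat_rpow.2 (by norm_num)
  refine ⟨3 * (1 + ∑' n : ℕ, (n : ℝ) ^ (-(3 / 2) : ℝ)), ?_, fun τ hτ N hN => ?_⟩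
  · have : 0 ≤ ∑' n : ℕ, (n : ℝ) ^ (-(3 / 2) : ℝ) := tsum_nonneg fun n => by positivity
    positivity
  set s : ℂ := 1 + τ * Complex.I with hs
  have hre : s.re = 1 := by simp [hs]
  have hs1 : s ≠ 1 := by simp [hs, hτ]
  have hsn : ‖s‖ ≤ 1 + |τ| := by
    refine (norm_add_le _ _).trans ?_; simp
  set G : ℕ → ℂ := fun n => (Real.log n : ℂ) * (n : ℂ) ^ (1 - s) / (1 - s)
    - (n : ℂ) ^ (1 - s) / (1 - s) ^ 2 with hG
  have main : ‖∑ n ∈ Icc 1 N, (Real.log n : ℂ) * (n : ℂ) ^ (-s) - (G N - G 1)‖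
      ≤ ∑ n ∈ Ico 1 N, 3 * ‖s‖ * (n : ℝ) ^ (-(3 / 2) : ℝ) := by
    induction N, hN using Nat.le_induction with
    | base => simp
    | succ N hN ih =>
      rw [Finset.sum_Icc_succ_top (by omega), Finset.sum_Ico_succ_top hN]
      refine le_trans (le_of_eq ?_) ((norm_add_le _ _).trans (add_le_add ih (log_step hre hs1 hN)))
      congr 1
      simp only [hG]
      ring
  have h1s : 1 - s = -(τ * Complex.I) := by rw [hs]; ring
  have hb : ∀ n : ℕ, 1 ≤ n → ‖(n : ℂ) ^ (1 - s) / (1 - s) ^ 2‖ = 1 / τ ^ 2 := by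
    intro n hn
    rw [norm_div, Complex.norm_natCast_cpow_of_pos (by omega), h1s]
    simp
  have tot : ∑ n ∈ Ico 1 N, 3 * ‖s‖ * (n : ℝ) ^ (-(3 / 2) : ℝ)
      ≤ 3 * (1 + ∑' n : ℕ, (n : ℝ) ^ (-(3 / 2) : ℝ)) * (1 + |τ|) := by
    rw [← mul_sum]
    have := hsum.sum_le_tsum (Ico 1 N) (fun n _ => by positivity)
    have h3 : 0 ≤ ∑ n ∈ Ico 1 N, (n : ℝ) ^ (-(3 / 2) : ℝ) := sum_nonneg fun n _ => by positivity
    calc 3 * ‖s‖ * ∑ n ∈ Ico 1 N, (n : ℝ) ^ (-(3 / 2) : ℝ)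
        ≤ 3 * (1 + |τ|) * (1 + ∑' n : ℕ, (n : ℝ) ^ (-(3 / 2) : ℝ)) := by gcongr; linarith
      _ = _ := by ring
  have e : ∑ n ∈ Icc 1 N, (Real.log n : ℂ) * (n : ℂ) ^ (-s)
      - (Real.log N : ℂ) * ((N : ℂ) ^ (-(τ * Complex.I)) / (-(τ * Complex.I)))
      = (∑ n ∈ Icc 1 N, (Real.log n : ℂ) * (n : ℂ) ^ (-s) - (G N - G 1))
        - (N : ℂ) ^ (1 - s) / (1 - s) ^ 2 + ((1 : ℕ) : ℂ) ^ (1 - s) / (1 - s) ^ 2 := by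
    simp only [hG, ← h1s]
    simp
    ring
  rw [e]
  refine (norm_add_le _ _).trans ((add_le_add_left (norm_sub_le _ _) _).trans ?_)
  rw [hb N hN, hb 1 le_rfl]
  have : 2 / τ ^ 2 = 1 / τ ^ 2 + 1 / τ ^ 2 := by ring
  linarith

lemma norm_cpow_I_sub_le (τ : ℝ) {x y : ℝ} (hx : 0 < x) (hy : 0 < y) :
    ‖(x : ℂ) ^ (-(τ * Complex.I)) - (y : ℂ) ^ (-(τ * Complex.I))‖
      ≤ |τ| * |Real.log x - Real.log y| := by
  have e : ∀ z : ℝ, 0 < z → (z : ℂ) ^ (-(τ * Complex.I))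
      = Complex.exp (Complex.I * ((-(τ * Real.log z) : ℝ) : ℂ)) := by
    intro z hz
    rw [Complex.cpow_def_of_ne_zero (by exact_mod_cast hz.ne'), ← Complex.ofReal_log hz.le]
    congr 1; push_cast; ring
  rw [e x hx, e y hy]
  have : Complex.exp (Complex.I * ((-(τ * Real.log x) : ℝ) : ℂ))
      - Complex.exp (Complex.I * ((-(τ * Real.log y) : ℝ) : ℂ))
      = Complex.exp (Complex.I * ((-(τ * Real.log y) : ℝ) : ℂ)) *
        (Complex.exp (Complex.I * ((-(τ * (Real.log x - Real.log y)) : ℝ) : ℂ)) - 1) := by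
    rw [mul_sub, ← Complex.exp_add]; push_cast; ring_nf
  rw [this, norm_mul, mul_comm Complex.I, Complex.norm_exp_ofReal_mul_I, one_mul]
  refine (Real.norm_exp_I_mul_ofReal_sub_one_le (x := -(τ * (Real.log x - Real.log y)))).trans ?_
  simp

/-- Uniform bound for the twisted von Mangoldt sums on the line `Re s = 1`. -/
lemma Sv_bound {t₀ : ℝ} (ht : 0 < t₀) : ∃ C : ℝ, 0 < C ∧ ∀ τ : ℝ, t₀ ≤ |τ| → ∀ N : ℕ,
    ‖Sv τ N‖ ≤ C * (|τ| * √|τ|) := by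
  obtain ⟨C₁, hC₁, hlog⟩ := sum_log_cpow
  obtain ⟨c, hc, hz⟩ := zeta_lower ht
  set K : ℝ := 6 / t₀ ^ 2 + (C₁ + 36) * (1 / t₀ + 1) + 2 / t₀ ^ 3 with hK
  refine ⟨K / c, by positivity, fun τ hτ N => ?_⟩
  rcases Nat.eq_zero_or_pos N with rfl | hN
  · simp [Sv]; positivity
  have hτ0 : 0 < |τ| := lt_of_lt_of_le ht hτ
  have hτne : τ ≠ 0 := abs_pos.1 hτ0
  have hN0 : (0 : ℝ) < N := by exact_mod_cast hN
  set s : ℂ := 1 + τ * Complex.I with hs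
  have hre : s.re = 1 := by simp [hs]
  have hs1 : s ≠ 1 := by simp [hs, hτne]
  have hsn : ‖s‖ ≤ 1 + |τ| := by
    refine (norm_add_le _ _).trans ?_; simp
  have hsn1 : 1 ≤ ‖s‖ := by
    have := Complex.abs_re_le_norm s
    rwa [hre, abs_one] at this
  have h1s : 1 - s = -(τ * Complex.I) := by rw [hs]; ring
  set ω : ℂ := (N : ℂ) ^ (-(τ * Complex.I)) / (-(τ * Complex.I)) with hω
  have hωn : ‖ω‖ = 1 / |τ| := by
    rw [hω, norm_div, Complex.norm_natCast_cpow_of_pos hN]; simp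
  -- the convolution identity `log = Λ ∗ 1`, twisted by `n^{-s}`
  have hconv : ∑ n ∈ Icc 1 N, (Real.log n : ℂ) * (n : ℂ) ^ (-s)
      = ∑ d ∈ Icc 1 N, (Λ d : ℂ) * (d : ℂ) ^ (-s) * Zs s (N / d) := by
    have h := sum_conv (fun d => (Λ d : ℂ) * (d : ℂ) ^ (-s)) (fun m => (m : ℂ) ^ (-s)) N
    simp only [Zs]
    rw [← h]
    refine sum_congr rfl fun n _ => ?_
    rw [← sum_antidiag_vonMangoldt n]
    push_cast
    rw [sum_mul]
    refine sum_congr rfl fun x hx => ?_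
    rw [← (Nat.mem_divisorsAntidiagonal.1 hx).1, Nat.cast_mul, Complex.natCast_mul_natCast_cpow]
    ring
  have hterm : ∀ d ∈ Icc 1 N, ‖(Λ d : ℂ) * (d : ℂ) ^ (-s) * Zs s (N / d)
      - ((Λ d : ℂ) * (d : ℂ) ^ (-s) * riemannZeta s + ((Λ d / d : ℝ) : ℂ) * ω)‖
      ≤ 6 * ‖s‖ / N * Λ d := by
    intro d hd
    obtain ⟨hd1, hdN⟩ := mem_Icc.1 hd
    have hd0 : (0 : ℝ) < d := by exact_mod_cast hd1
    have hdc : (d : ℂ) ≠ 0 := by exact_mod_cast hd0.ne'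
    set n := N / d with hn
    have hn1 : 1 ≤ n := (Nat.one_le_div_iff hd1).2 hdN
    have hn0 : (0 : ℝ) < n := by exact_mod_cast hn1
    have hnle : (n : ℝ) ≤ N / d := Nat.cast_div_le
    have hnlt : (N : ℝ) / d < n + 1 := by
      rw [hn, ← Nat.floor_div_eq_div (K := ℝ)]
      exact Nat.lt_floor_add_one _
    have hn2 : 1 / (n : ℝ) ≤ 2 * d / N := by
      rw [div_le_div_iff₀ hn0 hN0]
      have h1 : (1 : ℝ) ≤ n := by exact_mod_cast hn1
      rw [div_lt_iff₀ hd0] at hnlt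
      nlinarith
    have hza := zeta_approx hre.ge hs1 hn1
    have hy0 : (0 : ℝ) < N / d := by positivity
    have hcp := norm_cpow_I_sub_le τ hn0 hy0
    have hll : |Real.log n - Real.log (N / d)| ≤ 1 / n := by
      have h1 : Real.log n ≤ Real.log (N / d) := Real.log_le_log hn0 hnle
      have h2 : Real.log (N / d) ≤ Real.log n + 1 / n := by
        have h3 : Real.log (N / d) ≤ Real.log (n * (1 + 1 / n)) := by
          apply Real.log_le_log hy0
          have : (n : ℝ) * (1 + 1 / n) = n + 1 := by field_simp
          linarith
        rw [Real.log_mul hn0.ne' (by positivity)] at h3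
        have := Real.log_le_sub_one_of_pos (show (0 : ℝ) < 1 + 1 / n by positivity)
        linarith
      rw [abs_le]; constructor <;> linarith
    have hω2 : (((N : ℝ) / d : ℝ) : ℂ) ^ (-(τ * Complex.I)) / (-(τ * Complex.I))
        = (d : ℂ) ^ (τ * Complex.I) * ω := by
      rw [hω, ← mul_div_assoc]
      congr 1
      rw [Complex.ofReal_div, div_eq_mul_inv, ← Complex.ofReal_inv,
        Complex.mul_cpow_ofReal_nonneg hN0.le (by positivity)]
      rw [Complex.ofReal_inv, Complex.ofReal_natCast, Complex.ofReal_natCast, Complex.inv_cpow,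
        Complex.cpow_neg (d : ℂ), inv_inv, mul_comm]
      rw [Complex.natCast_arg]; exact Real.pi_pos.ne
    have hds : (d : ℂ) ^ (-s) * (d : ℂ) ^ (τ * Complex.I) = (((1 : ℝ) / d : ℝ) : ℂ) := by
      rw [← Complex.cpow_add _ _ hdc, hs, show -(1 + τ * Complex.I) + τ * Complex.I = -1 by ring,
        Complex.cpow_neg_one]
      push_cast; ring
    have eq : (Λ d : ℂ) * (d : ℂ) ^ (-s) * Zs s n
      - ((Λ d : ℂ) * (d : ℂ) ^ (-s) * riemannZeta s + ((Λ d / d : ℝ) : ℂ) * ω)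
      = (Λ d : ℂ) * (d : ℂ) ^ (-s) *
        (-(riemannZeta s - (Zs s n - (n : ℂ) ^ (1 - s) / (1 - s)))
          + ((n : ℂ) ^ (-(τ * Complex.I)) - (((N : ℝ) / d : ℝ) : ℂ) ^ (-(τ * Complex.I)))
            / (-(τ * Complex.I))) := by
      have : ((Λ d / d : ℝ) : ℂ) * ω = (Λ d : ℂ) * (d : ℂ) ^ (-s) * ((d : ℂ) ^ (τ * Complex.I) * ω) := by
        rw [show (Λ d : ℂ) * (d : ℂ) ^ (-s) * ((d : ℂ) ^ (τ * Complex.I) * ω)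
          = (Λ d : ℂ) * ((d : ℂ) ^ (-s) * (d : ℂ) ^ (τ * Complex.I)) * ω by ring, hds]
        push_cast; ring
      rw [this, ← hω2, ← h1s]
      ring
    rw [eq, norm_mul, norm_mul, Complex.norm_real,
      Real.norm_of_nonneg ArithmeticFunction.vonMangoldt_nonneg]
    have hdn : ‖(d : ℂ) ^ (-s)‖ = 1 / d := by
      rw [Complex.norm_natCast_cpow_of_pos hd1]; simp [hre, Real.rpow_neg_one]
    rw [hdn]
    have b2 : ‖((n : ℂ) ^ (-(τ * Complex.I)) - (((N : ℝ) / d : ℝ) : ℂ) ^ (-(τ * Complex.I)))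
            / (-(τ * Complex.I))‖ ≤ 1 / n := by
      rw [norm_div, norm_neg, norm_mul, Complex.norm_I, mul_one, Complex.norm_real,
        Real.norm_eq_abs, div_le_iff₀ hτ0]
      rw [Complex.ofReal_natCast] at hcp
      refine hcp.trans ?_
      rw [mul_comm]; gcongr
    have b3 := (norm_add_le (-(riemannZeta s - (Zs s n - (n : ℂ) ^ (1 - s) / (1 - s))))
      (((n : ℂ) ^ (-(τ * Complex.I)) - (((N : ℝ) / d : ℝ) : ℂ) ^ (-(τ * Complex.I)))
            / (-(τ * Complex.I)))).trans (add_le_add ((norm_neg _).le.trans hza) b2)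
    have b4 : 2 * ‖s‖ / n + 1 / n ≤ 6 * ‖s‖ * d / N := by
      calc 2 * ‖s‖ / n + 1 / n = (2 * ‖s‖ + 1) * (1 / n) := by ring
        _ ≤ (3 * ‖s‖) * (2 * d / N) := by gcongr; linarith
        _ = _ := by ring
    calc _ ≤ Λ d * (1 / d) * (6 * ‖s‖ * d / N) := by
          gcongr
          exact b3.trans b4
      _ = _ := by field_simp
  have herr : ‖∑ n ∈ Icc 1 N, (Real.log n : ℂ) * (n : ℂ) ^ (-s)
      - (Sv τ N * riemannZeta s + ((∑ n ∈ Icc 1 N, Λ n / n : ℝ) : ℂ) * ω)‖ ≤ 36 * ‖s‖ := by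
    rw [hconv, Sv, sum_mul, Complex.ofReal_sum, sum_mul, ← sum_add_distrib, ← sum_sub_distrib]
    refine (norm_sum_le _ _).trans ((sum_le_sum hterm).trans ?_)
    rw [← mul_sum]
    calc _ ≤ 6 * ‖s‖ / N * (6 * N) := by gcongr; exact sum_vonMangoldt_le N
      _ = _ := by field_simp; norm_num
  have hW := hlog τ hτne N hN
  rw [← hs, ← hω] at hW
  have hM := mertens hN
  have e : Sv τ N * riemannZeta s =
      -(∑ n ∈ Icc 1 N, (Real.log n : ℂ) * (n : ℂ) ^ (-s)
        - (Sv τ N * riemannZeta s + ((∑ n ∈ Icc 1 N, Λ n / n : ℝ) : ℂ) * ω))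
      + (∑ n ∈ Icc 1 N, (Real.log n : ℂ) * (n : ℂ) ^ (-s) - (Real.log N : ℂ) * ω)
      - ((∑ n ∈ Icc 1 N, Λ n / n - Real.log N : ℝ) : ℂ) * ω := by
    push_cast; ring
  have hprod : ‖Sv τ N * riemannZeta s‖ ≤ K * |τ| := by
    rw [e]
    refine (norm_sub_le _ _).trans ((add_le_add_left (norm_add_le _ _) _).trans ?_)
    rw [norm_neg, norm_mul, Complex.norm_real, hωn, Real.norm_eq_abs]
    have f1 : |∑ n ∈ Icc 1 N, Λ n / n - Real.log N| * (1 / |τ|) ≤ 6 / t₀ ^ 2 * |τ| := by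
      calc _ ≤ 6 * (1 / |τ|) := by gcongr
        _ = 6 / |τ| ^ 2 * |τ| := by field_simp
        _ ≤ _ := by gcongr
    have f2 : 2 / τ ^ 2 ≤ 2 / t₀ ^ 3 * |τ| := by
      rw [← sq_abs]
      calc 2 / |τ| ^ 2 = 2 / |τ| ^ 3 * |τ| := by field_simp
        _ ≤ _ := by gcongr
    have f3 : 1 + |τ| ≤ (1 / t₀ + 1) * |τ| := by
      have : 1 ≤ 1 / t₀ * |τ| := by rw [one_div, inv_mul_eq_div, le_div_iff₀ ht]; linarith
      linarith
    have f4 : 36 * ‖s‖ + C₁ * (1 + |τ|) ≤ (C₁ + 36) * (1 / t₀ + 1) * |τ| := by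
      calc _ ≤ (C₁ + 36) * (1 + |τ|) := by nlinarith
        _ ≤ (C₁ + 36) * ((1 / t₀ + 1) * |τ|) := by gcongr
        _ = _ := by ring
    rw [hK]
    linarith
  have hzs := hz τ hτ
  rw [norm_mul] at hprod
  have hq : 0 < √|τ| := Real.sqrt_pos.2 hτ0
  have g : ‖Sv τ N‖ * (c / √|τ|) ≤ K * |τ| := le_trans (by gcongr) hprod
  rw [← mul_div_assoc, div_le_iff₀ hq] at g
  rw [div_mul_eq_mul_div, le_div_iff₀ hc]
  linarith

/-! ### Fejér means of the square wave and the multiplicative function -/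

/-- The Fejér mean of order `N` of the Fourier series of the square wave `sgn (cos θ)`. -/
noncomputable def fej (N : ℕ) (θ : ℝ) : ℝ :=
  4 / Real.pi * ∑ k ∈ Icc 1 N, (1 - k / N : ℝ) * (Real.sin (k * (Real.pi / 2)) / k * Real.cos (k * θ))

/-- The Fejér kernel (times `N`) as the sum of two squares, i.e. `|∑_{j < N} e^{ijx}|²`. -/
lemma fejer_kernel_eq (N : ℕ) (x : ℝ) :
    N + 2 * ∑ k ∈ Icc 1 N, ((N : ℝ) - k) * Real.cos (k * x)
      = (∑ j ∈ range N, Real.cos (j * x)) ^ 2 + (∑ j ∈ range N, Real.sin (j * x)) ^ 2 := by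
  induction N with
  | zero => simp
  | succ N ih =>
    have h1 : ∑ k ∈ Icc 1 (N + 1), (((N + 1 : ℕ) : ℝ) - k) * Real.cos (k * x)
        = ∑ k ∈ Icc 1 N, ((N : ℝ) - k) * Real.cos (k * x) + ∑ k ∈ Icc 1 N, Real.cos (k * x) := by
      rw [Finset.sum_Icc_succ_top (by omega), ← sum_add_distrib]
      simp only [sub_self, zero_mul, add_zero]
      refine sum_congr rfl fun k _ => ?_
      push_cast; ring
    have h2 : ∑ k ∈ Icc 1 N, Real.cos (k * x)
        = Real.cos (N * x) * ∑ j ∈ range N, Real.cos (j * x)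
          + Real.sin (N * x) * ∑ j ∈ range N, Real.sin (j * x) := by
      rw [mul_sum, mul_sum, ← sum_add_distrib]
      have : ∀ j ∈ range N, Real.cos (N * x) * Real.cos (j * x) + Real.sin (N * x) * Real.sin (j * x)
          = Real.cos (((N - 1 - j + 1 : ℕ) : ℝ) * x) := by
        intro j hj
        have := mem_range.1 hj
        rw [← Real.cos_sub]
        have e : N - 1 - j + 1 = N - j := by omega
        rw [e, Nat.cast_sub this.le]; ring_nf
      rw [sum_congr rfl this, sum_range_reflect (fun j => Real.cos (((j + 1 : ℕ) : ℝ) * x)) N]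
      rw [range_eq_Ico, sum_Ico_add' (fun j : ℕ => Real.cos ((j : ℝ) * x)) 0 N 1]
      rfl
    rw [h1, h2, sum_range_succ, sum_range_succ]
    have := Real.sin_sq_add_cos_sq (N * x)
    push_cast
    nlinarith

/-- Primitive of the Fejér kernel. -/
noncomputable def fejPrim (N : ℕ) (x : ℝ) : ℝ :=
  x + 2 * ∑ k ∈ Icc 1 N, (1 - k / N : ℝ) * (Real.sin (k * x) / k)

lemma fejPrim_mono {N : ℕ} (hN : 1 ≤ N) : Monotone (fejPrim N) := by
  have hN0 : (0 : ℝ) < N := by exact_mod_cast hN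
  have hd : ∀ x, HasDerivAt (fejPrim N)
      (1 + 2 * ∑ k ∈ Icc 1 N, (1 - k / N : ℝ) * Real.cos (k * x)) x := by
    intro x
    refine (hasDerivAt_id x).add (HasDerivAt.const_mul 2 (HasDerivAt.fun_sum fun k hk => ?_))
    have hk0 : (k : ℝ) ≠ 0 := by
      have := (mem_Icc.1 hk).1
      exact_mod_cast (by omega : k ≠ 0)
    refine HasDerivAt.const_mul _ ?_
    have := (((hasDerivAt_id x).const_mul (k : ℝ)).sin).div_const (k : ℝ)
    refine this.congr_deriv ?_
    simp [hk0]
  refine monotone_of_deriv_nonneg (fun x => (hd x).differentiableAt) fun x => ?_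
  rw [(hd x).deriv]
  have h := fejer_kernel_eq N x
  have e : (N : ℝ) * (1 + 2 * ∑ k ∈ Icc 1 N, (1 - k / N : ℝ) * Real.cos (k * x))
      = N + 2 * ∑ k ∈ Icc 1 N, ((N : ℝ) - k) * Real.cos (k * x) := by
    rw [mul_add, mul_one, mul_left_comm, mul_sum]
    congr 2
    refine sum_congr rfl fun k _ => ?_
    field_simp
  rw [h] at e
  refine nonneg_of_mul_nonneg_right (?_ : (0 : ℝ) ≤ N * _) hN0
  rw [e]; positivity

lemma fejPrim_add_two_pi (N : ℕ) (x : ℝ) :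
    fejPrim N (x + 2 * Real.pi) = fejPrim N x + 2 * Real.pi := by
  simp only [fejPrim]
  have : ∀ k : ℕ, Real.sin (k * (x + 2 * Real.pi)) = Real.sin (k * x) := fun k => by
    rw [mul_add]; exact Real.sin_add_nat_mul_two_pi _ k
  simp only [this]; ring

/-- The Fejér mean of the square wave is a difference of values of `fejPrim`: the square wave
is `2 χ - 1` with `χ` the indicator function of `|θ| ≤ π / 2` modulo `2π`. -/
lemma fej_eq (N : ℕ) (θ : ℝ) : fej N θ =
    (fejPrim N (θ + Real.pi / 2) - fejPrim N (θ - Real.pi / 2)) / Real.pi - 1 := by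
  have hs : ∑ k ∈ Icc 1 N, (1 - k / N : ℝ) * (Real.sin (k * (θ + Real.pi / 2)) / k)
      - ∑ k ∈ Icc 1 N, (1 - k / N : ℝ) * (Real.sin (k * (θ - Real.pi / 2)) / k)
      = 2 * ∑ k ∈ Icc 1 N, (1 - k / N : ℝ) * (Real.sin (k * (Real.pi / 2)) / k * Real.cos (k * θ)) := by
    rw [← sum_sub_distrib, mul_sum]
    refine sum_congr rfl fun k _ => ?_
    rw [mul_add, mul_sub, Real.sin_add, Real.sin_sub]; ring
  simp only [fejPrim, fej]
  rw [eq_sub_iff_add_eq, eq_div_iff Real.pi_ne_zero, add_mul, mul_right_comm,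
    div_mul_cancel₀ _ Real.pi_ne_zero]
  linarith

/-- The primitive of the nonnegative Fejér kernel is monotone and increases by `2π` over a period. -/
lemma fej_mem {N : ℕ} (hN : 1 ≤ N) (θ : ℝ) : fej N θ ∈ Set.Icc (-1 : ℝ) 1 := by
  have hpi := Real.pi_pos
  have h1 := fejPrim_mono hN (show θ - Real.pi / 2 ≤ θ + Real.pi / 2 by linarith)
  have h2 := fejPrim_mono hN (show θ + Real.pi / 2 ≤ θ - Real.pi / 2 + 2 * Real.pi by linarith)
  rw [fejPrim_add_two_pi] at h2
  rw [fej_eq]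
  constructor
  · have : 0 ≤ (fejPrim N (θ + Real.pi / 2) - fejPrim N (θ - Real.pi / 2)) / Real.pi :=
      div_nonneg (by linarith) hpi.le
    linarith
  · have : (fejPrim N (θ + Real.pi / 2) - fejPrim N (θ - Real.pi / 2)) / Real.pi ≤ 2 := by
      rw [div_le_iff₀ hpi]; linarith
    linarith

/-- Degree of the Fejér mean attached to the integer `n`. A degree `(log n)^δ` leads to error terms
of size `(log N)^(1-δ)` and `(log N)^(3δ/2)`, which balance at `δ = 2/5`; it matters that the
resulting exponent `3/5` is less than `2/π`. -/
noncomputable def deg (n : ℕ) : ℕ := ⌈(1 + Real.log n) ^ (2 / 5 : ℝ)⌉₊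

lemma one_le_one_add_log (n : ℕ) : 1 ≤ 1 + Real.log n := by
  linarith [Real.log_natCast_nonneg n]

lemma one_le_deg (n : ℕ) : 1 ≤ deg n := by
  have := one_le_one_add_log n
  exact Nat.one_le_ceil_iff.2 (by positivity)

lemma deg_mono : Monotone deg := by
  intro m n h
  refine Nat.ceil_mono ?_
  have := one_le_one_add_log m
  refine Real.rpow_le_rpow (by linarith) (add_le_add_right ?_ 1) (by norm_num)
  rcases Nat.eq_zero_or_pos m with rfl | hm
  · simpa using Real.log_natCast_nonneg n
  · exact Real.log_le_log (by exact_mod_cast hm) (by exact_mod_cast h)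

lemma deg_ge (n : ℕ) : (1 + Real.log n) ^ (2 / 5 : ℝ) ≤ deg n := Nat.le_ceil _

lemma deg_le (n : ℕ) : (deg n : ℝ) ≤ 2 * (1 + Real.log n) ^ (2 / 5 : ℝ) := by
  have h1 := one_le_one_add_log n
  have h := (Nat.ceil_lt_add_one (show 0 ≤ (1 + Real.log n) ^ (2 / 5 : ℝ) by positivity)).le
  have h2 : 1 ≤ (1 + Real.log n) ^ (2 / 5 : ℝ) := Real.one_le_rpow h1 (by norm_num)
  rw [deg]; linarith

/-- The value of the multiplicative function at a prime `p`. -/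
noncomputable def hval (t : ℝ) (p : ℕ) : ℝ := fej (deg p) (t * Real.log p)

/-- The completely multiplicative function with prime values `hval t p`; at `0` it takes the junk
value `1`. -/
noncomputable def ff (t : ℝ) (n : ℕ) : ℝ := (n.primeFactorsList.map (hval t)).prod

lemma abs_hval_le (t : ℝ) (p : ℕ) : |hval t p| ≤ 1 := abs_le.2 (fej_mem (one_le_deg p) _)

lemma abs_ff_le (t : ℝ) (n : ℕ) : |ff t n| ≤ 1 := by
  rw [ff]
  generalize n.primeFactorsList = l
  induction l with
  | nil => simp
  | cons a l ih =>
    rw [List.map_cons, List.prod_cons, abs_mul]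
    exact mul_le_one₀ (abs_hval_le t a) (abs_nonneg _) ih

lemma ff_one (t : ℝ) : ff t 1 = 1 := by simp [ff]

lemma ff_prime (t : ℝ) {p : ℕ} (hp : p.Prime) : ff t p = hval t p := by
  simp [ff, Nat.primeFactorsList_prime hp]

lemma ff_mul (t : ℝ) {m n : ℕ} (hm : m ≠ 0) (hn : n ≠ 0) : ff t (m * n) = ff t m * ff t n := by
  rw [ff, ((Nat.perm_primeFactorsList_mul hm hn).map (hval t)).prod_eq, List.map_append,
    List.prod_append, ff, ff]

lemma ff_isMult (t : ℝ) : IsMult (ff t) := by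
  refine ⟨ff_one t, fun m n h => ?_⟩
  rcases Nat.eq_zero_or_pos m with rfl | hm
  · rw [Nat.coprime_zero_left] at h; simp [h, ff_one]
  rcases Nat.eq_zero_or_pos n with rfl | hn
  · rw [Nat.coprime_zero_right] at h; simp [h, ff_one]
  exact ff_mul t (Nat.pos_iff_ne_zero.1 hm) (Nat.pos_iff_ne_zero.1 hn)

/-- Abel summation with monotone weights in `[0, 1]`. -/
lemma abel_bound {w : ℕ → ℝ} (hw : Monotone w) (h0 : 0 ≤ w 0) (h1 : ∀ n, w n ≤ 1) {c : ℕ → ℂ}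
    {B : ℝ} (hB : ∀ N, ‖∑ n ∈ Icc 1 N, c n‖ ≤ B) (N : ℕ) :
    ‖∑ n ∈ Icc 1 N, (w n : ℂ) * c n‖ ≤ 2 * B := by
  have hB0 : 0 ≤ B := (norm_nonneg _).trans (hB 0)
  have key : ∀ N, ‖∑ n ∈ Icc 1 N, (w n : ℂ) * c n - w N * ∑ n ∈ Icc 1 N, c n‖ ≤ (w N - w 0) * B := by
    intro N
    induction N with
    | zero => simp
    | succ N ih =>
      rw [Finset.sum_Icc_succ_top (by omega), Finset.sum_Icc_succ_top (by omega)]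
      have e : ∑ n ∈ Icc 1 N, (w n : ℂ) * c n + w (N + 1) * c (N + 1)
          - w (N + 1) * (∑ n ∈ Icc 1 N, c n + c (N + 1))
          = (∑ n ∈ Icc 1 N, (w n : ℂ) * c n - w N * ∑ n ∈ Icc 1 N, c n)
            - ((w (N + 1) - w N : ℝ) : ℂ) * ∑ n ∈ Icc 1 N, c n := by push_cast; ring
      rw [e]
      refine (norm_sub_le _ _).trans ?_
      have hd : 0 ≤ w (N + 1) - w N := sub_nonneg.2 (hw (Nat.le_succ N))
      rw [norm_mul, Complex.norm_real, Real.norm_of_nonneg hd]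
      have := mul_le_mul_of_nonneg_left (hB N) hd
      linarith
  have hwN : 0 ≤ w N := h0.trans (hw (Nat.zero_le N))
  have e : ∑ n ∈ Icc 1 N, (w n : ℂ) * c n = (∑ n ∈ Icc 1 N, (w n : ℂ) * c n - w N * ∑ n ∈ Icc 1 N, c n)
    + w N * ∑ n ∈ Icc 1 N, c n := by ring
  rw [e]
  refine (norm_add_le _ _).trans ?_
  rw [norm_mul, Complex.norm_real, Real.norm_of_nonneg hwN]
  have a1 := key N
  have a2 := mul_le_mul_of_nonneg_left (hB N) hwN
  have a3 := mul_le_mul_of_nonneg_right (h1 N) hB0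
  nlinarith

/-! ### Resonance at the frequency `t` -/

/-- Higher prime powers contribute a bounded amount to `∑ Λ(n) / n`. -/
lemma sum_nonprime : ∃ C : ℝ, 0 < C ∧ ∀ N : ℕ,
    ∑ n ∈ Icc 1 N, (if n.Prime then 0 else Λ n / n) ≤ C := by
  have h := ArithmeticFunction.vonMangoldt.summable_residueClass_non_primes_div (q := 1) 0
  have e : (fun n : ℕ => (if n.Prime then 0
      else ArithmeticFunction.vonMangoldt.residueClass (0 : ZMod 1) n) / (n : ℝ))
      = fun n : ℕ => if n.Prime then 0 else Λ n / n := by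
    funext n
    have : ArithmeticFunction.vonMangoldt.residueClass (0 : ZMod 1) n = Λ n := by
      rw [ArithmeticFunction.vonMangoldt.residueClass]
      exact Set.indicator_of_mem (s := {n : ℕ | (n : ZMod 1) = 0}) (Subsingleton.elim _ _) _
    rw [this]; split_ifs <;> simp
  rw [e] at h
  have h0 : ∀ n : ℕ, 0 ≤ (if n.Prime then 0 else Λ n / n) := fun n => by
    split_ifs
    · exact le_rfl
    · exact div_nonneg ArithmeticFunction.vonMangoldt_nonneg (by positivity)
  refine ⟨∑' n : ℕ, (if n.Prime then 0 else Λ n / n) + 1, ?_, fun N => ?_⟩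
  · have : 0 ≤ ∑' n : ℕ, (if n.Prime then 0 else Λ n / n) := tsum_nonneg h0
    linarith
  · have := h.sum_le_tsum (Icc 1 N) fun n _ => h0 n
    linarith

lemma rpow_concave {a b : ℝ} (ha : 0 < a) (hab : a ≤ b) :
    (3 / 5) * (b - a) * b ^ (-(2 / 5) : ℝ) ≤ b ^ (3 / 5 : ℝ) - a ^ (3 / 5 : ℝ) := by
  have hb : 0 < b := ha.trans_le hab
  have h := rpow_one_add_le_one_add_mul_self (s := a / b - 1) (p := 3 / 5)
    (by have := div_pos ha hb; linarith) (by norm_num) (by norm_num)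
  rw [add_sub_cancel, Real.div_rpow ha.le hb.le, div_le_iff₀ (by positivity)] at h
  have e : b ^ (3 / 5 : ℝ) = b * b ^ (-(2 / 5) : ℝ) := by
    nth_rw 2 [← Real.rpow_one b]; rw [← Real.rpow_add hb]; norm_num
  have e2 : (1 + 3 / 5 * (a / b - 1)) * b ^ (3 / 5 : ℝ)
      = b ^ (3 / 5 : ℝ) + (3 / 5) * (a - b) * b ^ (-(2 / 5) : ℝ) := by
    rw [e]; field_simp
  rw [e2] at h
  linarith

/-- By partial summation from Mertens' theorem, as `deg n` is about `(log n)^(2/5)`. -/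
lemma sum_deg : ∃ C : ℝ, 0 < C ∧ ∀ N : ℕ,
    ∑ n ∈ Icc 1 N, Λ n / n / deg n ≤ C * (1 + Real.log N) ^ (3 / 5 : ℝ) := by
  set S : ℕ → ℝ := fun N => 1 + ∑ n ∈ Icc 1 N, Λ n / n with hS
  have hterm0 : ∀ n : ℕ, 0 ≤ Λ n / n := fun n =>
    div_nonneg ArithmeticFunction.vonMangoldt_nonneg (by positivity)
  have hS1 : ∀ N, 1 ≤ S N := fun N => by
    have : 0 ≤ ∑ n ∈ Icc 1 N, Λ n / n := sum_nonneg fun n _ => hterm0 n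
    simp only [hS]; linarith
  have hSup : ∀ N, S N ≤ 7 * (1 + Real.log N) := by
    intro N
    have hl := Real.log_natCast_nonneg N
    rcases Nat.eq_zero_or_pos N with rfl | hN
    · simp [hS]
    have := (abs_le.1 (mertens hN)).2
    simp only [hS]; linarith
  have key : ∀ N, ∑ n ∈ Icc 1 N, Λ n / n / deg n ≤ 7 * (5 / 3) * (S N) ^ (3 / 5 : ℝ) := by
    intro N
    induction N with
    | zero => simp [hS]; norm_num
    | succ N ih =>
      rw [Finset.sum_Icc_succ_top (by omega)]
      have hst : S (N + 1) = S N + Λ (N + 1) / (N + 1 : ℕ) := by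
        simp only [hS]; rw [Finset.sum_Icc_succ_top (by omega)]; ring
      have h1 := rpow_concave (a := S N) (b := S (N + 1)) (by linarith [hS1 N])
        (by rw [hst]; linarith [hterm0 (N + 1)])
      have hl := one_le_one_add_log (N + 1)
      have h2 : 1 / (deg (N + 1) : ℝ) ≤ 7 * S (N + 1) ^ (-(2 / 5) : ℝ) := by
        have hSp : 0 < S (N + 1) := by linarith [hS1 (N + 1)]
        have hp : (S (N + 1)) ^ (2 / 5 : ℝ) ≤ 7 * deg (N + 1) := by
          calc (S (N + 1)) ^ (2 / 5 : ℝ) ≤ (7 * (1 + Real.log (N + 1 : ℕ))) ^ (2 / 5 : ℝ) := by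
                gcongr; exact hSup _
            _ = 7 ^ (2 / 5 : ℝ) * (1 + Real.log (N + 1 : ℕ)) ^ (2 / 5 : ℝ) :=
                Real.mul_rpow (by norm_num) (by linarith)
            _ ≤ 7 * deg (N + 1) := by
                gcongr
                · calc (7 : ℝ) ^ (2 / 5 : ℝ) ≤ 7 ^ (1 : ℝ) :=
                        Real.rpow_le_rpow_of_exponent_le (by norm_num) (by norm_num)
                    _ = 7 := Real.rpow_one 7
                · exact deg_ge _
        have hd : (0 : ℝ) < deg (N + 1) := by exact_mod_cast one_le_deg (N + 1)
        rw [Real.rpow_neg hSp.le, div_le_iff₀ hd, mul_right_comm, ← div_eq_mul_inv,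
          le_div_iff₀ (by positivity), one_mul]
        exact hp
      have h3 : Λ (N + 1) / (N + 1 : ℕ) / deg (N + 1)
          ≤ 7 * (5 / 3) * (S (N + 1) ^ (3 / 5 : ℝ) - S N ^ (3 / 5 : ℝ)) := by
        calc Λ (N + 1) / (N + 1 : ℕ) / deg (N + 1)
            = Λ (N + 1) / (N + 1 : ℕ) * (1 / deg (N + 1)) := by ring
          _ ≤ Λ (N + 1) / (N + 1 : ℕ) * (7 * S (N + 1) ^ (-(2 / 5) : ℝ)) :=
              mul_le_mul_of_nonneg_left h2 (hterm0 _)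
          _ = 7 * (5 / 3) * ((3 / 5) * (S (N + 1) - S N) * S (N + 1) ^ (-(2 / 5) : ℝ)) := by
              rw [hst]; ring
          _ ≤ _ := by gcongr
      linarith
  refine ⟨7 * (5 / 3) * 7, by norm_num, fun N => (key N).trans ?_⟩
  rw [mul_assoc (7 * (5 / 3) : ℝ)]
  have hl := one_le_one_add_log N
  gcongr
  calc (S N) ^ (3 / 5 : ℝ) ≤ (7 * (1 + Real.log N)) ^ (3 / 5 : ℝ) := by
        have := hS1 N
        gcongr
        exact hSup N
    _ = 7 ^ (3 / 5 : ℝ) * (1 + Real.log N) ^ (3 / 5 : ℝ) :=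
        Real.mul_rpow (by norm_num) (by linarith)
    _ ≤ _ := by
        gcongr
        calc (7 : ℝ) ^ (3 / 5 : ℝ) ≤ 7 ^ (1 : ℝ) :=
              Real.rpow_le_rpow_of_exponent_le (by norm_num) (by norm_num)
          _ = 7 := Real.rpow_one 7

/-- Fejér weight of the frequency `k` at the integer `n`. -/
noncomputable def wk (k n : ℕ) : ℝ := max 0 (1 - k / deg n)

lemma wk_mono (k : ℕ) : Monotone (wk k) := by
  intro m n h
  have hd : (0 : ℝ) < deg m := by exact_mod_cast one_le_deg m
  have : (deg m : ℝ) ≤ deg n := by exact_mod_cast deg_mono h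
  unfold wk
  gcongr

lemma wk_nonneg (k n : ℕ) : 0 ≤ wk k n := le_max_left _ _

lemma wk_le_one (k n : ℕ) : wk k n ≤ 1 := by
  refine max_le zero_le_one ?_
  have : (0 : ℝ) ≤ k / deg n := by positivity
  linarith

/-- The Fejér mean of degree `deg n` written with a range of summation independent of `n`. -/
lemma fej_wk {n K : ℕ} (h : deg n ≤ K) (θ : ℝ) : fej (deg n) θ =
    4 / Real.pi * ∑ k ∈ Icc 1 K, wk k n * (Real.sin (k * (Real.pi / 2)) / k * Real.cos (k * θ)) := by
  have hd : (0 : ℝ) < deg n := by exact_mod_cast one_le_deg n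
  rw [fej]
  congr 1
  rw [← sum_subset (Icc_subset_Icc_right h)]
  · refine sum_congr rfl fun k hk => ?_
    have : (k : ℝ) ≤ deg n := by exact_mod_cast (mem_Icc.1 hk).2
    rw [wk, max_eq_right]
    rw [sub_nonneg, div_le_one hd]; exact this
  · intro k hk hk2
    have : deg n < k := by
      by_contra! hc
      exact hk2 (mem_Icc.2 ⟨(mem_Icc.1 hk).1, hc⟩)
    have : (deg n : ℝ) ≤ k := by exact_mod_cast this.le
    rw [wk, max_eq_left, zero_mul]
    rw [sub_nonpos, le_div_iff₀ hd]; linarith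

/-- Multiplying `n^{-1-it}` by the `k`-th harmonic shifts the frequency to `(1 ± k) t`. -/
lemma cos_twist (t : ℝ) (k : ℕ) {n : ℕ} (hn : 1 ≤ n) :
    (Real.cos (k * (t * Real.log n)) : ℂ) * (n : ℂ) ^ (-(1 + t * Complex.I))
      = ((n : ℂ) ^ (-(1 + ((1 - k) * t : ℝ) * Complex.I))
        + (n : ℂ) ^ (-(1 + ((1 + k) * t : ℝ) * Complex.I))) / 2 := by
  have hn0 : (n : ℂ) ≠ 0 := by exact_mod_cast (by omega : n ≠ 0)
  rw [Complex.ofReal_cos, Complex.cos, div_mul_eq_mul_div, add_mul,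
    Complex.cpow_def_of_ne_zero hn0, Complex.cpow_def_of_ne_zero hn0,
    Complex.cpow_def_of_ne_zero hn0, ← Complex.exp_add, ← Complex.exp_add]
  push_cast
  congr 3 <;> ring

/-- With `f = ff t`, the sum `∑_{n ≤ N} Λ(n) f(n) n^{-1-it}` is `(2/π) log N` up to a
lower power of `log N`: only the frequency `e^{iθ}` of the square wave resonates with `n^{-it}`. -/
lemma resonance {t : ℝ} (ht : t ≠ 0) : ∃ C : ℝ, 0 < C ∧ ∀ N : ℕ, 1 ≤ N →
    ‖∑ n ∈ Icc 1 N, (Λ n : ℂ) * (ff t n : ℂ) * (n : ℂ) ^ (-(1 + t * Complex.I))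
      - ((2 / Real.pi * Real.log N : ℝ) : ℂ)‖ ≤ C * (1 + Real.log N) ^ (3 / 5 : ℝ) := by
  obtain ⟨C₁, hC₁, hprime⟩ := sum_nonprime
  obtain ⟨C₂, hC₂, hdeg⟩ := sum_deg
  have ht0 : 0 < |t| := abs_pos.2 ht
  obtain ⟨C₃, hC₃, hSv⟩ := Sv_bound ht0
  set D : ℝ := 2 * (C₃ * (2 * |t| * √(2 * |t|))) with hD
  refine ⟨2 * C₁ + 8 * D + 6 + C₂, by positivity, fun N hN => ?_⟩
  set l : ℝ := 1 + Real.log N with hl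
  have hl1 : 1 ≤ l := one_le_one_add_log N
  set K := deg N with hK
  have hpi := Real.pi_pos
  have h2pi : 2 / Real.pi ≤ 1 := by rw [div_le_one hpi]; linarith [Real.pi_gt_three]
  -- where `Λ` is nonzero, `ff t` and `hval t` differ only at prime powers with exponent `≥ 2`
  have step1 : ‖∑ n ∈ Icc 1 N, (Λ n : ℂ) * (ff t n : ℂ) * (n : ℂ) ^ (-(1 + t * Complex.I))
      - ∑ n ∈ Icc 1 N, (Λ n : ℂ) * (hval t n : ℂ) * (n : ℂ) ^ (-(1 + t * Complex.I))‖ ≤ 2 * C₁ := by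
    rw [← sum_sub_distrib]
    refine (norm_sum_le _ _).trans ?_
    refine le_trans ?_ (mul_le_mul_of_nonneg_left (hprime N) zero_le_two)
    rw [mul_sum]
    refine sum_le_sum fun n hn => ?_
    have hn1 := (mem_Icc.1 hn).1
    rw [← sub_mul, ← mul_sub, norm_mul, norm_mul, Complex.norm_natCast_cpow_of_pos hn1,
      ← Complex.ofReal_sub, Complex.norm_real, Complex.norm_real,
      Real.norm_of_nonneg ArithmeticFunction.vonMangoldt_nonneg, Real.norm_eq_abs]
    have hre : (-(1 + t * Complex.I)).re = -1 := by simp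
    rw [hre, Real.rpow_neg_one]
    split_ifs with hp
    · simp [ff_prime t hp]
    · have : |ff t n - hval t n| ≤ 2 := by
        refine (abs_sub _ _).trans ?_
        linarith [abs_ff_le t n, abs_hval_le t n]
      have h0 := ArithmeticFunction.vonMangoldt_nonneg (n := n)
      calc Λ n * |ff t n - hval t n| * (n : ℝ)⁻¹ ≤ Λ n * 2 * (n : ℝ)⁻¹ := by gcongr
        _ = _ := by ring
  -- expansion of the Fejér means into the frequencies `(1 ± k) t`
  set A : ℕ → ℂ := fun k => ∑ n ∈ Icc 1 N, (wk k n : ℂ) *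
    ((Λ n : ℂ) * (n : ℂ) ^ (-(1 + ((1 - k) * t : ℝ) * Complex.I))) with hA
  set B : ℕ → ℂ := fun k => ∑ n ∈ Icc 1 N, (wk k n : ℂ) *
    ((Λ n : ℂ) * (n : ℂ) ^ (-(1 + ((1 + k) * t : ℝ) * Complex.I))) with hB
  set co : ℕ → ℝ := fun k => 2 / Real.pi * (Real.sin (k * (Real.pi / 2)) / k) with hco
  have step2 : ∑ n ∈ Icc 1 N, (Λ n : ℂ) * (hval t n : ℂ) * (n : ℂ) ^ (-(1 + t * Complex.I))
      = ∑ k ∈ Icc 1 K, (co k : ℂ) * (A k + B k) := by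
    have : ∀ n ∈ Icc 1 N, (Λ n : ℂ) * (hval t n : ℂ) * (n : ℂ) ^ (-(1 + t * Complex.I))
        = ∑ k ∈ Icc 1 K, (co k : ℂ) * ((wk k n : ℂ) *
          ((Λ n : ℂ) * (n : ℂ) ^ (-(1 + ((1 - k) * t : ℝ) * Complex.I)))
          + (wk k n : ℂ) * ((Λ n : ℂ) * (n : ℂ) ^ (-(1 + ((1 + k) * t : ℝ) * Complex.I)))) := by
      intro n hn
      obtain ⟨hn1, hnN⟩ := mem_Icc.1 hn
      rw [hval, fej_wk (deg_mono hnN), Complex.ofReal_mul, Complex.ofReal_sum, mul_sum, mul_sum,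
        sum_mul]
      refine sum_congr rfl fun k _ => ?_
      have := cos_twist t k hn1
      rw [Complex.ofReal_mul, Complex.ofReal_mul]
      calc _ = ((4 / Real.pi : ℝ) : ℂ) * (wk k n : ℂ) * (Λ n : ℂ) *
            ((Real.sin (k * (Real.pi / 2)) / k : ℝ) : ℂ) *
            ((Real.cos (k * (t * Real.log n)) : ℂ) * (n : ℂ) ^ (-(1 + t * Complex.I))) := by ring
        _ = _ := by rw [this, hco]; push_cast; ring
    rw [sum_congr rfl this, sum_comm]
    refine sum_congr rfl fun k _ => ?_
    rw [← mul_sum, sum_add_distrib]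
  -- the nonzero frequencies among `(1 ± k) t` are at least `|t|` in size, so `Sv_bound` applies
  have hfreq : ∀ (k : ℕ) (τ : ℝ), 1 ≤ k → |t| ≤ |τ| → |τ| ≤ 2 * k * |t| →
      ‖∑ n ∈ Icc 1 N, (wk k n : ℂ) * ((Λ n : ℂ) * (n : ℂ) ^ (-(1 + τ * Complex.I)))‖
        ≤ D * (k * √k) := by
    intro k τ hk h1 h2
    refine (abel_bound (wk_mono k) (wk_nonneg k 0) (wk_le_one k)
      (c := fun n => (Λ n : ℂ) * (n : ℂ) ^ (-(1 + τ * Complex.I))) (hSv τ h1) N).trans ?_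
    rw [hD, mul_assoc, mul_assoc C₃]
    gcongr 2 * (C₃ * ?_)
    calc |τ| * √|τ| ≤ (2 * k * |t|) * √(2 * k * |t|) := by gcongr
      _ = (2 * |t| * √(2 * |t|)) * (k * √k) := by
          rw [show 2 * (k : ℝ) * |t| = (2 * |t|) * k by ring, Real.sqrt_mul (by positivity)]
          ring
  have hBk : ∀ k : ℕ, 1 ≤ k → ‖B k‖ ≤ D * (k * √k) := by
    intro k hk
    have hk1 : (1 : ℝ) ≤ k := by exact_mod_cast hk
    refine hfreq k _ hk ?_ ?_ <;> rw [abs_mul, abs_of_nonneg (by linarith : (0 : ℝ) ≤ 1 + k)]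
    · nlinarith
    · gcongr; linarith
  have hAk : ∀ k : ℕ, 2 ≤ k → ‖A k‖ ≤ D * (k * √k) := by
    intro k hk
    have hk1 : (2 : ℝ) ≤ k := by exact_mod_cast hk
    refine hfreq k _ (by omega) ?_ ?_ <;> rw [abs_mul, abs_of_nonpos (by linarith : (1 : ℝ) - k ≤ 0)]
    · nlinarith
    · gcongr; linarith
  have hcok : ∀ k : ℕ, 1 ≤ k → ‖(co k : ℂ)‖ ≤ 1 / k := by
    intro k hk
    have hk1 : (1 : ℝ) ≤ k := by exact_mod_cast hk
    rw [Complex.norm_real, Real.norm_eq_abs, hco, abs_mul,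
      abs_of_pos (by positivity : 0 < 2 / Real.pi), abs_div,
      abs_of_pos (by linarith : (0 : ℝ) < k)]
    calc _ ≤ 1 * (1 / (k : ℝ)) := by
          gcongr
          exact Real.abs_sin_le_one _
      _ = _ := one_mul _
  have hK1 : 1 ≤ K := one_le_deg N
  have step3 : ‖∑ k ∈ Icc 1 K, (co k : ℂ) * (A k + B k) - (co 1 : ℂ) * A 1‖
      ≤ 8 * D * l ^ (3 / 5 : ℝ) := by
    have e : ∑ k ∈ Icc 1 K, (co k : ℂ) * (A k + B k) - (co 1 : ℂ) * A 1
        = ∑ k ∈ Icc 1 K, (co k : ℂ) * ((if k = 1 then 0 else A k) + B k) := by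
      rw [← add_sum_Ioc_eq_sum_Icc hK1, ← add_sum_Ioc_eq_sum_Icc hK1, if_pos rfl]
      have : ∑ k ∈ Ioc 1 K, (co k : ℂ) * ((if k = 1 then 0 else A k) + B k)
          = ∑ k ∈ Ioc 1 K, (co k : ℂ) * (A k + B k) :=
        sum_congr rfl fun k hk => by rw [if_neg (by have := (mem_Ioc.1 hk).1; omega)]
      rw [this]; ring
    rw [e]
    have hterm : ∀ k ∈ Icc 1 K, ‖(co k : ℂ) * ((if k = 1 then 0 else A k) + B k)‖ ≤ 2 * D * √K := by
      intro k hk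
      obtain ⟨hk1, hkK⟩ := mem_Icc.1 hk
      have hk0 : (0 : ℝ) < k := by exact_mod_cast hk1
      have h1 : ‖(if k = 1 then 0 else A k)‖ ≤ D * (k * √k) := by
        split_ifs with h
        · simp; positivity
        · exact hAk k (by omega)
      rw [norm_mul]
      calc _ ≤ 1 / (k : ℝ) * (D * (k * √k) + D * (k * √k)) := by
            gcongr
            · exact hcok k hk1
            · exact (norm_add_le _ _).trans (add_le_add h1 (hBk k hk1))
        _ = 2 * D * √k := by field_simp; ring
        _ ≤ _ := by gcongr
    refine (norm_sum_le _ _).trans ((sum_le_sum hterm).trans ?_)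
    rw [sum_const, Nat.card_Icc, add_tsub_cancel_right, nsmul_eq_mul]
    have hKl : (K : ℝ) * √K ≤ 4 * l ^ (3 / 5 : ℝ) := by
      have h1 : (K : ℝ) ≤ 2 * l ^ (2 / 5 : ℝ) := deg_le N
      have h2 : √(K : ℝ) ≤ 2 * l ^ (1 / 5 : ℝ) := by
        rw [Real.sqrt_le_left (by positivity), mul_pow, ← Real.rpow_mul_natCast (by linarith)]
        refine h1.trans ?_
        have : (0 : ℝ) ≤ l ^ (2 / 5 : ℝ) := by positivity
        norm_num
        linarith
      calc (K : ℝ) * √K ≤ (2 * l ^ (2 / 5 : ℝ)) * (2 * l ^ (1 / 5 : ℝ)) := by gcongr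
        _ = 4 * (l ^ (2 / 5 : ℝ) * l ^ (1 / 5 : ℝ)) := by ring
        _ = _ := by rw [← Real.rpow_add (by linarith)]; norm_num
    have hD0 : 0 ≤ D := by positivity
    nlinarith
  -- for `k = 1` the frequency `(1 - k) t` vanishes, and Mertens' theorem gives the main term
  have hl35 : 1 ≤ l ^ (3 / 5 : ℝ) := Real.one_le_rpow hl1 (by norm_num)
  have step4 : ‖(co 1 : ℂ) * A 1 - ((2 / Real.pi * Real.log N : ℝ) : ℂ)‖
      ≤ 6 + C₂ * l ^ (3 / 5 : ℝ) := by
    have hA1 : A 1 = ((∑ n ∈ Icc 1 N, Λ n / n - ∑ n ∈ Icc 1 N, Λ n / n / deg n : ℝ) : ℂ) := by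
      rw [hA, ← sum_sub_distrib, Complex.ofReal_sum]
      refine sum_congr rfl fun n _ => ?_
      have hd : (1 : ℝ) ≤ deg n := by exact_mod_cast one_le_deg n
      have : wk 1 n = 1 - 1 / deg n := by
        rw [wk, max_eq_right]
        · simp
        · rw [sub_nonneg, div_le_one (by linarith)]; simpa using hd
      rw [this]
      simp [Complex.cpow_neg_one]
      ring
    have hco1 : co 1 = 2 / Real.pi := by simp [hco]
    rw [hA1, hco1, ← Complex.ofReal_mul, ← Complex.ofReal_sub, Complex.norm_real, Real.norm_eq_abs,
      ← mul_sub, abs_mul, abs_of_pos (by positivity)]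
    have h1 := mertens hN
    have h2 := hdeg N
    have h3 : 0 ≤ ∑ n ∈ Icc 1 N, Λ n / n / deg n := sum_nonneg fun n _ =>
      div_nonneg (div_nonneg ArithmeticFunction.vonMangoldt_nonneg (by positivity)) (by positivity)
    have h4 : |∑ n ∈ Icc 1 N, Λ n / n - ∑ n ∈ Icc 1 N, Λ n / n / deg n - Real.log N|
        ≤ 6 + C₂ * l ^ (3 / 5 : ℝ) := by
      rw [sub_right_comm]
      refine (abs_sub _ _).trans (add_le_add h1 ?_)
      rw [abs_of_nonneg h3]; exact h2
    calc _ ≤ 1 * (6 + C₂ * l ^ (3 / 5 : ℝ)) := by gcongr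
      _ = _ := one_mul _
  rw [step2] at step1
  have tot := norm_add₃_le.trans (add_le_add (add_le_add step1 step3) step4)
  rw [sub_add_sub_cancel, sub_add_sub_cancel] at tot
  refine tot.trans ?_
  nlinarith

/-! ### The approximate differential equation for partial sums -/

/-- Partial sums of `a` in the logarithmic scale: `∑_{n ≤ e^V} a(n)`. -/
noncomputable def LL (a : ℕ → ℂ) (V : ℝ) : ℂ := ∑ n ∈ Icc 1 ⌊Real.exp V⌋₊, a n

/-- The primitive of `LL a`: `∑_{n ≤ e^V} a(n) (V - log n)`. -/
noncomputable def BB (a : ℕ → ℂ) (V : ℝ) : ℂ :=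
  ∑ n ∈ Icc 1 ⌊Real.exp V⌋₊, a n * ((V - Real.log n : ℝ) : ℂ)

/-- The identity `log = Λ ∗ 1`, twisted by a completely multiplicative function. -/
lemma sum_log_mul {a : ℕ → ℂ} (hmul : ∀ m n : ℕ, m ≠ 0 → n ≠ 0 → a (m * n) = a m * a n)
    (N : ℕ) : ∑ n ∈ Icc 1 N, a n * ((Real.log n : ℝ) : ℂ)
      = ∑ m ∈ Icc 1 N, a m * ∑ n ∈ Icc 1 (N / m), (Λ n : ℂ) * a n := by
  rw [← sum_conv a (fun n => (Λ n : ℂ) * a n)]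
  refine sum_congr rfl fun n hn => ?_
  have hn0 : n ≠ 0 := by have := (mem_Icc.1 hn).1; omega
  rw [← ArithmeticFunction.vonMangoldt_sum, ← Nat.sum_divisorsAntidiagonal' (f := fun _ j => Λ j)]
  push_cast
  rw [mul_sum]
  refine sum_congr rfl fun x hx => ?_
  obtain ⟨h1, h2⟩ := Nat.mem_divisorsAntidiagonal.1 hx
  have h3 : x.1 ≠ 0 := fun h => h2 (by rw [← h1, h, zero_mul])
  have h4 : x.2 ≠ 0 := fun h => h2 (by rw [← h1, h, mul_zero])
  rw [← h1, hmul _ _ h3 h4]; ring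

lemma sum_norm_le {a : ℕ → ℂ} (hnorm : ∀ n : ℕ, 1 ≤ n → ‖a n‖ ≤ (n : ℝ)⁻¹) {V : ℝ} (hV : 0 ≤ V) :
    ∑ n ∈ Icc 1 ⌊Real.exp V⌋₊, ‖a n‖ ≤ 1 + V := by
  have h1 : (1 : ℝ) ≤ Real.exp V := Real.one_le_exp hV
  have hN : 1 ≤ ⌊Real.exp V⌋₊ := Nat.one_le_floor_iff _ |>.2 h1
  have h2 : Real.log (⌊Real.exp V⌋₊ : ℝ) ≤ V := by
    rw [Real.log_le_iff_le_exp (by exact_mod_cast hN)]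
    exact Nat.floor_le (by positivity)
  calc _ ≤ ∑ n ∈ Icc 1 ⌊Real.exp V⌋₊, (n : ℝ)⁻¹ :=
        sum_le_sum fun n hn => hnorm n (mem_Icc.1 hn).1
    _ ≤ _ := by linarith [sum_inv_le ⌊Real.exp V⌋₊]

/-- Replacing `log ⌊e^V / m⌋` by `V - log m` costs at most `1`. -/
lemma floor_log {V : ℝ} {m : ℕ} (hm : m ∈ Icc 1 ⌊Real.exp V⌋₊) :
    1 ≤ ⌊Real.exp V⌋₊ / m ∧ 0 ≤ V - Real.log m ∧
    0 ≤ Real.log ((⌊Real.exp V⌋₊ / m : ℕ) : ℝ) ∧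
    Real.log ((⌊Real.exp V⌋₊ / m : ℕ) : ℝ) ≤ V - Real.log m ∧
    V - Real.log m ≤ Real.log ((⌊Real.exp V⌋₊ / m : ℕ) : ℝ) + 1 := by
  obtain ⟨h1, h2⟩ := mem_Icc.1 hm
  have hk : 1 ≤ ⌊Real.exp V⌋₊ / m := (Nat.one_le_div_iff (by omega)).2 h2
  have hm0 : (0 : ℝ) < m := by exact_mod_cast h1
  have hlog : V - Real.log m = Real.log (Real.exp V / m) := by
    rw [Real.log_div (by positivity) (by positivity), Real.log_exp]
  have hfl : ⌊Real.exp V⌋₊ / m = ⌊Real.exp V / m⌋₊ := (Nat.floor_div_natCast _ _).symm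
  rw [hlog]
  rw [hfl] at hk ⊢
  set y := Real.exp V / m with hy
  have hy0 : 0 < y := by positivity
  have hky : (⌊y⌋₊ : ℝ) ≤ y := Nat.floor_le hy0.le
  have hky2 : y < ⌊y⌋₊ + 1 := Nat.lt_floor_add_one y
  have hk1 : (1 : ℝ) ≤ ⌊y⌋₊ := by exact_mod_cast hk
  have h3 : 0 ≤ Real.log (⌊y⌋₊ : ℝ) := Real.log_nonneg hk1
  have h4 : Real.log (⌊y⌋₊ : ℝ) ≤ Real.log y := Real.log_le_log (by linarith) hky
  refine ⟨hk, h3.trans h4, h3, h4, ?_⟩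
  have : Real.log y ≤ Real.log ((⌊y⌋₊ : ℝ) * 2) := Real.log_le_log hy0 (by linarith)
  rw [Real.log_mul (by linarith) (by norm_num)] at this
  linarith [Real.log_two_lt_d9]

/-- The mean value of `Λ a` turns into an approximate differential equation for `BB a`,
as `LL a` is the derivative of `BB a`. -/
lemma approx_ode {a : ℕ → ℂ} {α β C : ℝ} (hα : 0 < α) (hβ : 0 < β) (hC : 0 < C)
    (hmul : ∀ m n : ℕ, m ≠ 0 → n ≠ 0 → a (m * n) = a m * a n)
    (hnorm : ∀ n : ℕ, 1 ≤ n → ‖a n‖ ≤ (n : ℝ)⁻¹)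
    (hM : ∀ N : ℕ, 1 ≤ N → ‖∑ n ∈ Icc 1 N, (Λ n : ℂ) * a n - ((α * Real.log N : ℝ) : ℂ)‖
      ≤ C * (1 + Real.log N) ^ β) {V : ℝ} (hV : 0 ≤ V) :
    ‖(V : ℂ) * LL a V - ((1 + α : ℝ) : ℂ) * BB a V‖ ≤ (C + α) * (1 + V) ^ (1 + β) := by
  have key : (V : ℂ) * LL a V - ((1 + α : ℝ) : ℂ) * BB a V
      = ∑ m ∈ Icc 1 ⌊Real.exp V⌋₊, a m *
        (∑ n ∈ Icc 1 (⌊Real.exp V⌋₊ / m), (Λ n : ℂ) * a n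
          - ((α * (V - Real.log m) : ℝ) : ℂ)) := by
    simp only [mul_sub _ _ (((_ : ℝ) : ℂ))]
    rw [sum_sub_distrib, ← sum_log_mul hmul, LL, BB, mul_sum, mul_sum, ← sum_sub_distrib,
      ← sum_sub_distrib]
    refine sum_congr rfl fun m _ => ?_
    push_cast; ring
  rw [key]
  have h1V : 1 ≤ 1 + V := by linarith
  calc _ ≤ ∑ m ∈ Icc 1 ⌊Real.exp V⌋₊, ‖a m‖ * ((C + α) * (1 + V) ^ β) := by
        refine norm_sum_le_of_le _ fun m hm => ?_
        rw [norm_mul]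
        refine mul_le_mul_of_nonneg_left ?_ (norm_nonneg _)
        obtain ⟨hk, h0, h1, h2, h3⟩ := floor_log hm
        set k := ⌊Real.exp V⌋₊ / m
        have hlm : 0 ≤ Real.log m := Real.log_natCast_nonneg m
        have e1 : ‖∑ n ∈ Icc 1 k, (Λ n : ℂ) * a n - ((α * (V - Real.log m) : ℝ) : ℂ)‖
            ≤ ‖∑ n ∈ Icc 1 k, (Λ n : ℂ) * a n - ((α * Real.log k : ℝ) : ℂ)‖
              + ‖((α * Real.log k : ℝ) : ℂ) - ((α * (V - Real.log m) : ℝ) : ℂ)‖ :=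
          norm_sub_le_norm_sub_add_norm_sub _ _ _
        have e2 : ‖((α * Real.log k : ℝ) : ℂ) - ((α * (V - Real.log m) : ℝ) : ℂ)‖ ≤ α := by
          rw [← Complex.ofReal_sub, Complex.norm_real, ← mul_sub, Real.norm_eq_abs, abs_mul,
            abs_of_pos hα]
          have : |Real.log k - (V - Real.log m)| ≤ 1 := by rw [abs_le]; constructor <;> linarith
          nlinarith
        have e3 : (1 + Real.log k) ^ β ≤ (1 + V) ^ β :=
          Real.rpow_le_rpow (by linarith) (by linarith) hβ.le
        have e4 : 1 ≤ (1 + V) ^ β := Real.one_le_rpow h1V hβ.le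
        have e5 := hM k hk
        nlinarith
    _ ≤ (1 + V) * ((C + α) * (1 + V) ^ β) := by
        rw [← sum_mul]
        exact mul_le_mul_of_nonneg_right (sum_norm_le hnorm hV) (by positivity)
    _ = _ := by rw [Real.rpow_add (by linarith), Real.rpow_one]; ring

lemma log_le_iff_floor {V : ℝ} {n : ℕ} (hn : 1 ≤ n) : Real.log n ≤ V ↔ n ≤ ⌊Real.exp V⌋₊ := by
  rw [Real.log_le_iff_le_exp (by exact_mod_cast hn), Nat.le_floor_iff (by positivity)]

lemma BB_eq_max (a : ℕ → ℂ) {V R : ℝ} (h : V ≤ R) :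
    BB a V = ∑ n ∈ Icc 1 ⌊Real.exp R⌋₊, a n * ((max (V - Real.log n) 0 : ℝ) : ℂ) := by
  have hsub : Icc 1 ⌊Real.exp V⌋₊ ⊆ Icc 1 ⌊Real.exp R⌋₊ :=
    Icc_subset_Icc le_rfl (Nat.floor_mono (Real.exp_le_exp.2 h))
  rw [BB, ← sum_subset hsub]
  · refine sum_congr rfl fun n hn => ?_
    obtain ⟨h1, h2⟩ := mem_Icc.1 hn
    have := (log_le_iff_floor h1).2 h2
    rw [max_eq_left (by linarith)]
  · intro n hn hn'
    have h1 := (mem_Icc.1 hn).1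
    have : V < Real.log n := by
      by_contra! hc
      exact hn' (mem_Icc.2 ⟨h1, (log_le_iff_floor h1).1 hc⟩)
    rw [max_eq_right (by linarith)]; simp

lemma LL_eq_ite (a : ℕ → ℂ) {V R : ℝ} (h : V ≤ R) :
    LL a V = ∑ n ∈ Icc 1 ⌊Real.exp R⌋₊, a n * (((if Real.log n ≤ V then 1 else 0) : ℝ) : ℂ) := by
  have hsub : Icc 1 ⌊Real.exp V⌋₊ ⊆ Icc 1 ⌊Real.exp R⌋₊ :=
    Icc_subset_Icc le_rfl (Nat.floor_mono (Real.exp_le_exp.2 h))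
  rw [LL, ← sum_subset hsub]
  · refine sum_congr rfl fun n hn => ?_
    obtain ⟨h1, h2⟩ := mem_Icc.1 hn
    rw [if_pos ((log_le_iff_floor h1).2 h2)]; simp
  · intro n hn hn'
    have h1 := (mem_Icc.1 hn).1
    rw [if_neg fun hc => hn' (mem_Icc.2 ⟨h1, (log_le_iff_floor h1).1 hc⟩)]; simp

lemma hasDerivWithinAt_max (c V : ℝ) :
    HasDerivWithinAt (fun x => max (x - c) 0) (if c ≤ V then 1 else 0) (Set.Ici V) V := by
  split_ifs with h
  · refine ((hasDerivAt_id V).sub_const c).hasDerivWithinAt.congr (fun x hx => ?_) ?_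
    · rw [max_eq_left (by have : V ≤ x := hx; linarith)]; rfl
    · rw [max_eq_left (by linarith)]; rfl
  · refine HasDerivAt.hasDerivWithinAt ?_
    refine (hasDerivAt_const V (0 : ℝ)).congr_of_eventuallyEq ?_
    filter_upwards [eventually_lt_nhds (not_le.1 h)] with x hx
    rw [max_eq_right (by linarith)]

lemma BB_hasDeriv (a : ℕ → ℂ) (V : ℝ) : HasDerivWithinAt (BB a) (LL a V) (Set.Ici V) V := by
  have hR : V ≤ V + 1 := by linarith
  rw [LL_eq_ite a hR]
  have h : HasDerivWithinAt (fun x : ℝ => ∑ n ∈ Icc 1 ⌊Real.exp (V + 1)⌋₊,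
      a n * ((max (x - Real.log n) 0 : ℝ) : ℂ))
      (∑ n ∈ Icc 1 ⌊Real.exp (V + 1)⌋₊, a n * (((if Real.log n ≤ V then 1 else 0) : ℝ) : ℂ))
      (Set.Ici V) V := by
    refine HasDerivWithinAt.fun_sum fun n _ => ?_
    exact ((hasDerivWithinAt_max (Real.log n) V).ofReal_comp).const_mul (a n)
  refine h.congr_of_eventuallyEq ?_ (BB_eq_max a hR)
  filter_upwards [mem_nhdsWithin_of_mem_nhds (eventually_lt_nhds (lt_add_one V))] with x hx
  exact BB_eq_max a (le_of_lt hx)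

lemma BB_continuousOn (a : ℕ → ℂ) (A R : ℝ) : ContinuousOn (BB a) (Set.Icc A R) := by
  refine ContinuousOn.congr (f := fun x : ℝ => ∑ n ∈ Icc 1 ⌊Real.exp R⌋₊,
      a n * ((max (x - Real.log n) 0 : ℝ) : ℂ)) ?_ fun x hx => BB_eq_max a hx.2
  fun_prop

/-- Integrating the approximate differential equation: `V^(-1-α) BB a V` converges, and the
error in `LL a V ~ C₀ V^α` is `O(V^β)`. -/
lemma LL_asymp {a : ℕ → ℂ} {α β K : ℝ} (hα : 0 < α) (hβ : 0 < β) (hK : 0 < K) (hβα : β < α)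
    (hode : ∀ V : ℝ, 0 ≤ V →
      ‖(V : ℂ) * LL a V - ((1 + α : ℝ) : ℂ) * BB a V‖ ≤ K * (1 + V) ^ (1 + β)) :
    ∃ C₀ : ℂ, ∃ C' : ℝ, 0 < C' ∧ ∀ V : ℝ, 1 ≤ V →
      ‖LL a V - C₀ * ((V ^ α : ℝ) : ℂ)‖ ≤ C' * V ^ β := by
  set K₁ := K * 2 ^ (1 + β) with hK₁
  have hK₁0 : 0 < K₁ := by positivity
  have hode1 : ∀ V : ℝ, 1 ≤ V →
      ‖(V : ℂ) * LL a V - ((1 + α : ℝ) : ℂ) * BB a V‖ ≤ K₁ * V ^ (1 + β) := fun V hV => by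
    refine (hode V (by linarith)).trans ?_
    rw [hK₁, mul_assoc, ← Real.mul_rpow (by norm_num) (by linarith)]
    gcongr; linarith
  set H : ℝ → ℂ := fun V => ((V ^ (-1 - α) : ℝ) : ℂ) * BB a V with hH
  set K₂ := K₁ / (α - β) with hK₂
  have hαβ : 0 < α - β := by linarith
  have hK₂0 : 0 < K₂ := by positivity
  have hinc : ∀ V₁ V₂ : ℝ, 1 ≤ V₁ → V₁ ≤ V₂ → ‖H V₂ - H V₁‖ ≤ K₂ * V₁ ^ (β - α) := by
    intro V₁ V₂ h1 h12
    have hb := image_norm_le_of_norm_deriv_right_le_deriv_boundary' (E := ℂ) (a := V₁) (b := V₂)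
      (f := fun V => H V - H V₁)
      (f' := fun V => ((V ^ (-2 - α) : ℝ) : ℂ) *
        ((V : ℂ) * LL a V - ((1 + α : ℝ) : ℂ) * BB a V))
      (B := fun V => K₂ * (V₁ ^ (β - α) - V ^ (β - α)))
      (B' := fun V => K₁ * V ^ (β - α - 1)) ?_ ?_ ?_ ?_ ?_ ?_ (Set.right_mem_Icc.2 h12)
    · refine hb.trans ?_
      have : 0 ≤ V₂ ^ (β - α) := by have : 0 ≤ V₂ := by linarith
                                    positivity
      exact mul_le_mul_of_nonneg_left (by linarith) hK₂0.le
    · refine ContinuousOn.sub (ContinuousOn.mul ?_ (BB_continuousOn a _ _)) continuousOn_const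
      refine Complex.continuous_ofReal.comp_continuousOn ?_
      refine ContinuousOn.rpow_const continuousOn_id fun x hx => Or.inl ?_
      have := hx.1; linarith
    · intro V hV
      have hV0 : 0 < V := by linarith [hV.1]
      have d1 := (Real.hasDerivAt_rpow_const (x := V) (p := -1 - α) (Or.inl hV0.ne')).ofReal_comp
      have d2 := (d1.hasDerivWithinAt (s := Set.Ici V)).mul (BB_hasDeriv a V)
      refine (d2.sub_const (H V₁)).congr_deriv ?_
      have e1 : V ^ (-1 - α) = V ^ (-2 - α) * V := by
        rw [← Real.rpow_add_one hV0.ne']; congr 1; ring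
      have e2 : -1 - α - 1 = -2 - α := by ring
      rw [e2, e1]; push_cast; ring
    · simp
    · refine ContinuousOn.mul continuousOn_const (ContinuousOn.sub continuousOn_const ?_)
      refine ContinuousOn.rpow_const continuousOn_id fun x hx => Or.inl ?_
      have := hx.1; linarith
    · intro V hV
      have hV0 : 0 < V := by linarith [hV.1]
      have d1 := Real.hasDerivAt_rpow_const (x := V) (p := β - α) (Or.inl hV0.ne')
      refine (((d1.const_sub (V₁ ^ (β - α))).const_mul K₂).hasDerivWithinAt).congr_deriv ?_
      rw [hK₂]; field_simp; ring
    · intro V hV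
      have hV1 : 1 ≤ V := by linarith [hV.1]
      have hV0 : 0 < V := by linarith
      rw [norm_mul, Complex.norm_real, Real.norm_of_nonneg (by positivity)]
      calc _ ≤ V ^ (-2 - α) * (K₁ * V ^ (1 + β)) :=
            mul_le_mul_of_nonneg_left (hode1 V hV1) (by positivity)
        _ = _ := by
          rw [mul_left_comm, ← Real.rpow_add hV0]; congr 2; ring
  have hb0 : Tendsto (fun n : ℕ => 2 * (K₂ * ((n : ℝ) + 1) ^ (β - α))) atTop (nhds 0) := by
    have : Tendsto (fun n : ℕ => ((n : ℝ) + 1) ^ (-(α - β))) atTop (nhds 0) :=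
      (tendsto_rpow_neg_atTop hαβ).comp
        (tendsto_atTop_add_const_right _ 1 tendsto_natCast_atTop_atTop)
    simpa [neg_sub] using (this.const_mul K₂).const_mul 2
  have hcs : CauchySeq (fun n : ℕ => H ((n : ℝ) + 1)) := by
    refine cauchySeq_of_le_tendsto_0 _ (fun n m N hn hm => ?_) hb0
    have hn' : (N : ℝ) + 1 ≤ n + 1 := by gcongr
    have hm' : (N : ℝ) + 1 ≤ m + 1 := by gcongr
    have hN : (1 : ℝ) ≤ N + 1 := by linarith [Nat.cast_nonneg (α := ℝ) N]
    have h1 := hinc _ _ hN hn'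
    have h2 := hinc _ _ hN hm'
    have := dist_triangle_right (H ((n : ℝ) + 1)) (H (m + 1)) (H (N + 1))
    rw [dist_eq_norm, dist_eq_norm, dist_eq_norm] at this
    rw [dist_eq_norm]
    linarith
  obtain ⟨C₁, hC₁⟩ := cauchySeq_tendsto_of_complete hcs
  have hlim : ∀ V : ℝ, 1 ≤ V → ‖C₁ - H V‖ ≤ K₂ * V ^ (β - α) := by
    intro V hV
    refine le_of_tendsto ((hC₁.sub_const (H V)).norm) ?_
    filter_upwards [eventually_ge_atTop ⌈V⌉₊] with n hn
    exact hinc V _ hV (by have := Nat.ceil_le.1 hn; linarith)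
  refine ⟨((1 + α : ℝ) : ℂ) * C₁, K₁ + (1 + α) * K₂, by positivity, fun V hV => ?_⟩
  have hV0 : 0 < V := by linarith
  have hVc : (V : ℂ) ≠ 0 := by exact_mod_cast hV0.ne'
  have e : LL a V - ((1 + α : ℝ) : ℂ) * C₁ * ((V ^ α : ℝ) : ℂ)
      = (V : ℂ)⁻¹ * ((V : ℂ) * LL a V - ((1 + α : ℝ) : ℂ) * BB a V)
        - ((1 + α : ℝ) : ℂ) * ((V ^ α : ℝ) : ℂ) * (C₁ - H V) := by
    have : (V : ℂ)⁻¹ * BB a V = ((V ^ α : ℝ) : ℂ) * H V := by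
      rw [hH]; simp only []
      rw [← mul_assoc, ← Complex.ofReal_mul, ← Real.rpow_add hV0]
      have : α + (-1 - α) = -1 := by ring
      rw [this, Real.rpow_neg_one]; push_cast; rfl
    have h2 : (V : ℂ)⁻¹ * ((V : ℂ) * LL a V - ((1 + α : ℝ) : ℂ) * BB a V)
        = LL a V - ((1 + α : ℝ) : ℂ) * ((V : ℂ)⁻¹ * BB a V) := by
      field_simp
    rw [h2, this]; ring
  rw [e]
  refine (norm_sub_le _ _).trans ?_
  rw [norm_mul, norm_mul, norm_mul, norm_inv, Complex.norm_real, Complex.norm_real,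
    Complex.norm_real, Real.norm_of_nonneg hV0.le, Real.norm_of_nonneg (by positivity),
    Real.norm_of_nonneg (by positivity)]
  have h1 : V⁻¹ * ‖(V : ℂ) * LL a V - ((1 + α : ℝ) : ℂ) * BB a V‖ ≤ K₁ * V ^ β := by
    calc _ ≤ V⁻¹ * (K₁ * V ^ (1 + β)) := mul_le_mul_of_nonneg_left (hode1 V hV) (by positivity)
      _ = _ := by rw [Real.rpow_add hV0, Real.rpow_one]; field_simp
  have h2 : (1 + α) * V ^ α * ‖C₁ - H V‖ ≤ (1 + α) * K₂ * V ^ β := by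
    calc _ ≤ (1 + α) * V ^ α * (K₂ * V ^ (β - α)) :=
          mul_le_mul_of_nonneg_left (hlim V hV) (by positivity)
      _ = (1 + α) * K₂ * (V ^ α * V ^ (β - α)) := by ring
      _ = _ := by rw [← Real.rpow_add hV0]; congr 2; ring
  linarith

/-! ### Nonvanishing of the leading coefficient -/

lemma log_pow_le {σ β u : ℝ} (h0 : 0 < σ) (h1 : σ ≤ 1) (hβ : 0 < β) (hβ1 : β ≤ 1) (hu : 0 ≤ u) :
    (1 + u) ^ β ≤ 2 * σ ^ (-β) * Real.exp (u * (σ / 2)) := by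
  have e1 : 1 + u ≤ (2 * σ⁻¹) * Real.exp (u * (σ / 2)) := by
    have : u * (σ / 2) + 1 ≤ Real.exp (u * (σ / 2)) := Real.add_one_le_exp _
    have h2 : (2 * σ⁻¹) * (u * (σ / 2) + 1) = u + 2 * σ⁻¹ := by field_simp
    have h3 : 1 ≤ σ⁻¹ := (one_le_inv₀ h0).2 h1
    have h4 : (2 * σ⁻¹) * (u * (σ / 2) + 1) ≤ (2 * σ⁻¹) * Real.exp (u * (σ / 2)) := by gcongr
    linarith
  calc (1 + u) ^ β ≤ ((2 * σ⁻¹) * Real.exp (u * (σ / 2))) ^ β :=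
        Real.rpow_le_rpow (by linarith) e1 hβ.le
    _ = 2 ^ β * σ ^ (-β) * (Real.exp (u * (σ / 2))) ^ β := by
        rw [Real.mul_rpow (by positivity) (by positivity),
          Real.mul_rpow (by positivity) (by positivity), Real.inv_rpow h0.le, Real.rpow_neg h0.le]
    _ ≤ 2 * σ ^ (-β) * Real.exp (u * (σ / 2)) := by
        have a1 : (2 : ℝ) ^ β ≤ 2 := by
          simpa using Real.rpow_le_rpow_of_exponent_le (x := 2) (by norm_num) hβ1
        have a2 : (Real.exp (u * (σ / 2))) ^ β ≤ Real.exp (u * (σ / 2)) := by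
          simpa using Real.rpow_le_rpow_of_exponent_le
            (Real.one_le_exp (x := u * (σ / 2)) (by positivity)) hβ1
        gcongr

/-- Abelian bound: partial sums of size `(log N)^β` give an `L`-series of size `σ^(-β)`
as `σ → 0+`. -/
lemma LSeries_bound {c : ℕ → ℂ} {C β : ℝ} (hC : 0 < C) (hβ : 0 < β) (hβ1 : β ≤ 1)
    (hc : ∀ N : ℕ, 1 ≤ N → ‖∑ n ∈ Icc 1 N, c n‖ ≤ C * (1 + Real.log N) ^ β)
    {σ : ℝ} (h0 : 0 < σ) (h1 : σ ≤ 1) (hs : LSeriesSummable c σ) :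
    ‖LSeries c σ‖ ≤ 4 * C * σ ^ (-β) := by
  have hb : ∀ N : ℕ, 1 ≤ N → ‖∑ n ∈ Icc 1 N, c n‖ ≤ 2 * C * σ ^ (-β) * (N : ℝ) ^ (σ / 2) := by
    intro N hN
    have hN0 : (0 : ℝ) < N := by exact_mod_cast hN
    refine (hc N hN).trans ?_
    have := log_pow_le h0 h1 hβ hβ1 (Real.log_natCast_nonneg N)
    rw [← Real.rpow_def_of_pos hN0] at this
    nlinarith
  have hO : (fun n ↦ ∑ k ∈ Icc 1 n, c k) =O[atTop] fun n : ℕ ↦ (n : ℝ) ^ (σ / 2) := by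
    refine Asymptotics.IsBigO.of_bound (2 * C * σ ^ (-β)) ?_
    filter_upwards [eventually_ge_atTop 1] with n hn
    rw [Real.norm_of_nonneg (by positivity)]
    exact hb n hn
  rw [LSeries_eq_mul_integral c (r := σ / 2) (by positivity) (by simp; linarith) hs hO, norm_mul,
    Complex.norm_real, Real.norm_of_nonneg h0.le]
  have hint : ‖∫ t in Set.Ioi (1 : ℝ), (∑ k ∈ Icc 1 ⌊t⌋₊, c k) * (t : ℂ) ^ (-((σ : ℂ) + 1))‖
      ≤ ∫ t in Set.Ioi (1 : ℝ), 2 * C * σ ^ (-β) * t ^ (-(σ / 2) - 1) := by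
    refine MeasureTheory.norm_integral_le_of_norm_le ?_ ?_
    · exact (integrableOn_Ioi_rpow_of_lt (by linarith) one_pos).const_mul _
    · refine (MeasureTheory.ae_restrict_mem measurableSet_Ioi).mono fun t ht => ?_
      have ht1 : (1 : ℝ) < t := ht
      have ht0 : 0 < t := by linarith
      rw [norm_mul, Complex.norm_cpow_eq_rpow_re_of_pos ht0]
      have e1 : (-((σ : ℂ) + 1)).re = -σ - 1 := by simp; ring
      rw [e1]
      have hN : 1 ≤ ⌊t⌋₊ := (Nat.one_le_floor_iff _).2 ht1.le
      calc _ ≤ 2 * C * σ ^ (-β) * (t : ℝ) ^ (σ / 2) * t ^ (-σ - 1) := by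
            refine mul_le_mul_of_nonneg_right ((hb _ hN).trans ?_) (by positivity)
            refine mul_le_mul_of_nonneg_left ?_ (by positivity)
            exact Real.rpow_le_rpow (by positivity) (Nat.floor_le ht0.le) (by positivity)
        _ = _ := by rw [mul_assoc, ← Real.rpow_add ht0]; congr 2; ring
  rw [MeasureTheory.integral_const_mul, integral_Ioi_rpow_of_lt (by linarith) one_pos] at hint
  calc _ ≤ σ * (2 * C * σ ^ (-β) * (-1 ^ (-(σ / 2) - 1 + 1) / (-(σ / 2) - 1 + 1))) :=
        mul_le_mul_of_nonneg_left hint h0.le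
    _ = _ := by
      have : -(σ / 2) - 1 + 1 = -(σ / 2) := by ring
      rw [this, Real.one_rpow]; field_simp; ring

lemma zeta_re_lower {σ : ℝ} (h0 : 0 < σ) (h1 : σ ≤ 1) :
    1 / σ - 3 ≤ (riemannZeta (1 + σ)).re := by
  have h := zeta_approx_of_one_lt (s := 1 + (σ : ℂ)) (by simp; exact h0) (N := 1) le_rfl
  have hZ : Zs (1 + (σ : ℂ)) 1 - ((1 : ℕ) : ℂ) ^ (1 - (1 + (σ : ℂ))) / (1 - (1 + (σ : ℂ)))
      = ((1 + 1 / σ : ℝ) : ℂ) := by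
    have : Zs (1 + (σ : ℂ)) 1 = 1 := by simp [Zs]
    rw [this]; push_cast; rw [Complex.one_cpow]
    have : (σ : ℂ) ≠ 0 := by exact_mod_cast h0.ne'
    rw [show (1 : ℂ) - (1 + σ) = -σ by ring, div_neg, sub_neg_eq_add]
  rw [hZ] at h
  have hn : ‖1 + (σ : ℂ)‖ ≤ 2 := by
    rw [← Complex.ofReal_one, ← Complex.ofReal_add, Complex.norm_real, Real.norm_of_nonneg
      (by linarith)]; linarith
  have := (Complex.abs_re_le_norm _).trans h
  rw [Complex.sub_re, Complex.ofReal_re, abs_le] at this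
  push_cast at this
  linarith [this.1]

section
variable {a : ℕ → ℂ}

lemma abscissa_le (hnorm : ∀ n : ℕ, 1 ≤ n → ‖a n‖ ≤ (n : ℝ)⁻¹) :
    LSeries.abscissaOfAbsConv a ≤ 0 := by
  have := LSeries.abscissaOfAbsConv_le_of_le_const_mul_rpow (f := a) (x := -1)
    ⟨1, fun n hn => by
      rw [one_mul, Real.rpow_neg_one]; exact hnorm n (Nat.one_le_iff_ne_zero.2 hn)⟩
  have e : ((-1 : ℝ) : EReal) + 1 = 0 := by
    rw [← EReal.coe_one, ← EReal.coe_add]; norm_num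
  rwa [e] at this

lemma abscissa_lt (hnorm : ∀ n : ℕ, 1 ≤ n → ‖a n‖ ≤ (n : ℝ)⁻¹) {σ : ℝ} (h0 : 0 < σ) :
    LSeries.abscissaOfAbsConv a < (σ : ℂ).re :=
  (abscissa_le hnorm).trans_lt (by simpa using h0)

lemma summable_Lambda (hnorm : ∀ n : ℕ, 1 ≤ n → ‖a n‖ ≤ (n : ℝ)⁻¹) {σ : ℝ} (h0 : 0 < σ) :
    LSeriesSummable (fun n => (Λ n : ℂ) * a n) σ := by
  have h := LSeriesSummable_logMul_of_lt_re (abscissa_lt hnorm h0)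
  refine Summable.of_norm_bounded h.norm fun n => ?_
  refine LSeries.norm_term_le _ ?_
  rw [LSeries.logMul, norm_mul, norm_mul, ← Complex.natCast_log, Complex.norm_real,
    Complex.norm_real, Real.norm_of_nonneg ArithmeticFunction.vonMangoldt_nonneg,
    Real.norm_of_nonneg (Real.log_natCast_nonneg n)]
  exact mul_le_mul_of_nonneg_right ArithmeticFunction.vonMangoldt_le_log (norm_nonneg _)

lemma norm_inv_nat (n : ℕ) : ‖((n : ℂ))⁻¹‖ ≤ (n : ℝ)⁻¹ := by simp

lemma LSeries_inv {σ : ℝ} (h0 : 0 < σ) :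
    LSeries (fun n : ℕ => (n : ℂ)⁻¹) σ = riemannZeta (1 + σ) := by
  rw [zeta_eq_tsum_one_div_nat_cpow (by simp; exact h0), LSeries]
  refine tsum_congr fun n => ?_
  rcases Nat.eq_zero_or_pos n with rfl | hn
  · have : (1 + (σ : ℂ)) ≠ 0 := by
      intro h; have := congrArg Complex.re h; simp at this; linarith
    simp [this]
  · rw [LSeries.term_of_ne_zero hn.ne', Complex.cpow_add _ _ (by exact_mod_cast hn.ne'),
      Complex.cpow_one]
    field_simp

/-- Near `0+`, the logarithmic derivative of the `L`-series of `a` has a pole of order one with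
residue `α`, up to `O(σ^(-β))`. -/
lemma Lambda_re_lower {α β C : ℝ} (hα : 0 < α) (hβ : 0 < β) (hβ1 : β ≤ 1) (hC : 0 < C)
    (hnorm : ∀ n : ℕ, 1 ≤ n → ‖a n‖ ≤ (n : ℝ)⁻¹)
    (hM : ∀ N : ℕ, 1 ≤ N → ‖∑ n ∈ Icc 1 N, (Λ n : ℂ) * a n - ((α * Real.log N : ℝ) : ℂ)‖
      ≤ C * (1 + Real.log N) ^ β) {σ : ℝ} (h0 : 0 < σ) (h1 : σ ≤ 1) :
    α / σ - (4 * (C + α) + 3 * α) * σ ^ (-β)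
      ≤ (LSeries (fun n => (Λ n : ℂ) * a n) σ).re := by
  have hsi : LSeriesSummable (fun n : ℕ => (n : ℂ)⁻¹) σ :=
    LSeriesSummable_of_abscissaOfAbsConv_lt_re (abscissa_lt (fun n _ => norm_inv_nat n) h0)
  have hsi2 : LSeriesSummable ((α : ℂ) • fun n : ℕ => (n : ℂ)⁻¹) σ := hsi.smul _
  have hsL := summable_Lambda hnorm h0
  have hb := LSeries_bound (c := (fun n => (Λ n : ℂ) * a n) - ((α : ℂ) • fun n : ℕ => (n : ℂ)⁻¹))
    (C := C + α) (by positivity) hβ hβ1 ?_ h0 h1 (hsL.sub hsi2)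
  · rw [LSeries_sub hsL hsi2, LSeries_smul, LSeries_inv h0] at hb
    have h2 := (Complex.abs_re_le_norm _).trans hb
    rw [Complex.sub_re, abs_le, Complex.re_ofReal_mul] at h2
    have h3 := zeta_re_lower h0 h1
    have h4 : 1 ≤ σ ^ (-β) := Real.one_le_rpow_of_pos_of_le_one_of_nonpos h0 h1 (by linarith)
    have h5 : α * (1 / σ - 3) ≤ α * (riemannZeta (1 + σ)).re := by gcongr
    have h6 : α * (1 / σ - 3) = α / σ - 3 * α := by ring
    nlinarith [h2.1]
  · intro N hN
    have e : ∑ n ∈ Icc 1 N, ((fun n => (Λ n : ℂ) * a n) - ((α : ℂ) • fun n : ℕ => (n : ℂ)⁻¹)) n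
        = (∑ n ∈ Icc 1 N, (Λ n : ℂ) * a n - ((α * Real.log N : ℝ) : ℂ))
          - ((α * (∑ n ∈ Icc 1 N, (n : ℝ)⁻¹ - Real.log N) : ℝ) : ℂ) := by
      simp only [Pi.sub_apply, Pi.smul_apply, smul_eq_mul]
      rw [sum_sub_distrib, ← mul_sum]; push_cast; ring
    rw [e]
    refine (norm_sub_le _ _).trans ?_
    have h2 := hM N hN
    have h3 : |∑ n ∈ Icc 1 N, (n : ℝ)⁻¹ - Real.log N| ≤ 1 := by
      have l1 := sum_inv_le N
      have l2 := log_add_one_le_harmonic N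
      have l3 : Real.log N ≤ Real.log (N + 1 : ℕ) :=
        Real.log_le_log (by exact_mod_cast hN) (by push_cast; linarith)
      have l4 : ((harmonic N : ℚ) : ℝ) = ∑ n ∈ Icc 1 N, (n : ℝ)⁻¹ := by
        rw [harmonic_eq_sum_Icc]; push_cast; rfl
      rw [l4] at l2
      rw [abs_le]; constructor <;> linarith
    rw [Complex.norm_real, Real.norm_eq_abs, abs_mul, abs_of_pos hα]
    have h4 : 1 ≤ (1 + Real.log N) ^ β :=
      Real.one_le_rpow (one_le_one_add_log N) hβ.le
    nlinarith

/-- At `σ = 1` the term `a 1 = 1` dominates, since `∑_{n ≥ 2} n^{-2} < 1`. -/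
lemma LSeries_at_one_ne_zero (ha1 : a 1 = 1) (hnorm : ∀ n : ℕ, 1 ≤ n → ‖a n‖ ≤ (n : ℝ)⁻¹) :
    LSeries a ((1 : ℝ) : ℂ) ≠ 0 := by
  intro h
  have hs : LSeriesSummable a ((1 : ℝ) : ℂ) :=
    LSeriesSummable_of_abscissaOfAbsConv_lt_re (abscissa_lt hnorm one_pos)
  have hb : ∀ n, ‖LSeries.term a ((1 : ℝ) : ℂ) n‖ ≤ 1 / (n : ℝ) ^ 2 := by
    intro n
    rcases Nat.eq_zero_or_pos n with rfl | hn
    · simp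
    · rw [LSeries.term_of_ne_zero hn.ne', Complex.ofReal_one, Complex.cpow_one, norm_div,
        Complex.norm_natCast]
      have := hnorm n hn
      calc ‖a n‖ / n ≤ (n : ℝ)⁻¹ / n := by gcongr
        _ = _ := by field_simp
  rw [LSeries, hs.tsum_eq_add_tsum_ite 1] at h
  have hz := hasSum_zeta_two
  have hz2 := hz.summable.tsum_eq_add_tsum_ite 1
  rw [hz.tsum_eq] at hz2
  have hsum : Summable fun n : ℕ => if n = 1 then 0 else 1 / (n : ℝ) ^ 2 := by
    refine hz.summable.of_nonneg_of_le (fun n => ?_) fun n => ?_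
    · split_ifs <;> positivity
    · split_ifs
      · positivity
      · exact le_rfl
  have hle : ‖∑' n, ite (n = 1) 0 (LSeries.term a ((1 : ℝ) : ℂ) n)‖
      ≤ ∑' n : ℕ, if n = 1 then 0 else 1 / (n : ℝ) ^ 2 := by
    refine tsum_of_norm_bounded hsum.hasSum fun n => ?_
    split_ifs
    · simp
    · exact hb n
  have h1 : LSeries.term a ((1 : ℝ) : ℂ) 1 = 1 := by simp [LSeries.term_of_ne_zero, ha1]
  rw [h1] at h
  have h2 : ‖∑' n, ite (n = 1) 0 (LSeries.term a ((1 : ℝ) : ℂ) n)‖ = 1 := by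
    rw [eq_neg_of_add_eq_zero_right h]; simp
  have hpi := Real.pi_lt_d2
  have hpi0 := Real.pi_pos
  push_cast at hz2
  norm_num at hz2
  have : Real.pi ^ 2 < 12 := by nlinarith
  rw [h2] at hle
  norm_num at hle
  linarith

end

section
variable {a : ℕ → ℂ}

/-- The derivative of the `L`-series of a completely multiplicative function, through its
logarithmic derivative `-∑ Λ(n) a(n) n^{-σ}`. -/
lemma LSeries_deriv_eq (hmul : ∀ m n : ℕ, m ≠ 0 → n ≠ 0 → a (m * n) = a m * a n)
    (hnorm : ∀ n : ℕ, 1 ≤ n → ‖a n‖ ≤ (n : ℝ)⁻¹) {σ : ℝ} (h0 : 0 < σ) :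
    HasDerivAt (fun x : ℝ => LSeries a (x : ℂ))
      (-(LSeries (fun n => (Λ n : ℂ) * a n) σ * LSeries a σ)) σ := by
  have h := (LSeries_hasDerivAt (abscissa_lt hnorm h0)).comp_ofReal
  refine h.congr_deriv ?_
  rw [← LSeries_convolution' (summable_Lambda hnorm h0)
    (LSeriesSummable_of_abscissaOfAbsConv_lt_re (abscissa_lt hnorm h0))]
  congr 1
  refine LSeries_congr (fun {n} hn => ?_) _
  rw [LSeries.convolution_def, LSeries.logMul, ← Complex.natCast_log, ← sum_antidiag_vonMangoldt]
  push_cast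
  rw [sum_mul]
  refine sum_congr rfl fun x hx => ?_
  obtain ⟨h1, h2⟩ := Nat.mem_divisorsAntidiagonal.1 hx
  have h3 : x.1 ≠ 0 := fun h => h2 (by rw [← h1, h, zero_mul])
  have h4 : x.2 ≠ 0 := fun h => h2 (by rw [← h1, h, mul_zero])
  rw [← h1, hmul _ _ h3 h4]; ring

/-- `|LSeries a σ|` is bounded below by a multiple of `σ^(-α)` as `σ → 0+`: the quantity
`|LSeries a σ|² σ^(2α) exp(-c σ^(1-β))` is antitone on `(0, 1]`. -/
lemma LSeries_lower {α β C : ℝ} (hα : 0 < α) (hβ : 0 < β) (hβ1 : β < 1) (hC : 0 < C)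
    (ha1 : a 1 = 1)
    (hmul : ∀ m n : ℕ, m ≠ 0 → n ≠ 0 → a (m * n) = a m * a n)
    (hnorm : ∀ n : ℕ, 1 ≤ n → ‖a n‖ ≤ (n : ℝ)⁻¹)
    (hM : ∀ N : ℕ, 1 ≤ N → ‖∑ n ∈ Icc 1 N, (Λ n : ℂ) * a n - ((α * Real.log N : ℝ) : ℂ)‖
      ≤ C * (1 + Real.log N) ^ β) :
    ∃ e₁ : ℝ, 0 < e₁ ∧ ∀ σ : ℝ, 0 < σ → σ ≤ 1 → e₁ ≤ ‖LSeries a σ‖ ^ 2 * σ ^ (2 * α) := by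
  set K := 4 * (C + α) + 3 * α with hK
  have hK0 : 0 < K := by positivity
  set c := 2 * K / (1 - β) with hc
  have hβ1' : 0 < 1 - β := by linarith
  have hc0 : 0 < c := by positivity
  set E : ℝ → ℝ := fun σ => ‖LSeries a σ‖ ^ 2 * (σ ^ (2 * α) * Real.exp (-c * σ ^ (1 - β)))
  have hd : ∀ σ : ℝ, 0 < σ → HasDerivAt E
      (-2 * (LSeries (fun n => (Λ n : ℂ) * a n) σ).re * ‖LSeries a σ‖ ^ 2
          * (σ ^ (2 * α) * Real.exp (-c * σ ^ (1 - β)))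
        + ‖LSeries a σ‖ ^ 2 * (σ ^ (2 * α) * Real.exp (-c * σ ^ (1 - β))
          * (2 * α / σ - 2 * K * σ ^ (-β)))) σ := by
    intro σ h0
    have d1 := (LSeries_deriv_eq hmul hnorm h0).norm_sq
    have d2 := Real.hasDerivAt_rpow_const (x := σ) (p := 2 * α) (Or.inl h0.ne')
    have d3 := ((Real.hasDerivAt_rpow_const (x := σ) (p := 1 - β)
      (Or.inl h0.ne')).const_mul (-c)).exp
    refine (d1.mul (d2.mul d3)).congr_deriv ?_
    have i1 : 2 * inner ℝ (LSeries a σ)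
        (-(LSeries (fun n => (Λ n : ℂ) * a n) σ * LSeries a σ))
        = -2 * (LSeries (fun n => (Λ n : ℂ) * a n) σ).re * ‖LSeries a σ‖ ^ 2 := by
      rw [Complex.inner, ← Complex.normSq_eq_norm_sq, Complex.normSq_apply]
      simp; ring
    rw [i1]
    have e1 : σ ^ (2 * α - 1) = σ ^ (2 * α) / σ := by rw [Real.rpow_sub_one h0.ne']
    have e2 : (1 - β - 1) = -β := by ring
    rw [e1, e2]
    have e3 : c * (1 - β) = 2 * K := by rw [hc]; field_simp
    congr 1
    linear_combination (-‖LSeries a σ‖ ^ 2 * σ ^ (2 * α) * Real.exp (-c * σ ^ (1 - β))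
      * σ ^ (-β)) * e3
  have hanti : AntitoneOn E (Set.Ioc 0 1) := by
    refine antitoneOn_of_deriv_nonpos (convex_Ioc 0 1)
      (fun σ hσ => (hd σ hσ.1).continuousAt.continuousWithinAt) ?_ ?_
    · intro σ hσ
      rw [interior_Ioc] at hσ
      exact (hd σ hσ.1).differentiableAt.differentiableWithinAt
    · intro σ hσ
      rw [interior_Ioc] at hσ
      have h0 : 0 < σ := hσ.1
      rw [(hd σ hσ.1).deriv]
      have hre := Lambda_re_lower hα hβ hβ1.le hC hnorm hM h0 hσ.2.le
      rw [← hK] at hre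
      set W := ‖LSeries a σ‖ ^ 2 * (σ ^ (2 * α) * Real.exp (-c * σ ^ (1 - β))) with hW
      have hW0 : 0 ≤ W := by positivity
      have e : -2 * (LSeries (fun n => (Λ n : ℂ) * a n) σ).re * ‖LSeries a σ‖ ^ 2
          * (σ ^ (2 * α) * Real.exp (-c * σ ^ (1 - β)))
        + ‖LSeries a σ‖ ^ 2 * (σ ^ (2 * α) * Real.exp (-c * σ ^ (1 - β))
          * (2 * α / σ - 2 * K * σ ^ (-β)))
          = 2 * W * (α / σ - K * σ ^ (-β) - (LSeries (fun n => (Λ n : ℂ) * a n) σ).re) := by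
        rw [hW]; ring
      rw [e]
      exact mul_nonpos_of_nonneg_of_nonpos (by positivity) (by linarith)
  refine ⟨E 1, ?_, fun σ h0 h1 => ?_⟩
  · have : 0 < ‖LSeries a ((1 : ℝ) : ℂ)‖ := norm_pos_iff.2 (LSeries_at_one_ne_zero ha1 hnorm)
    positivity
  · have h2 : E 1 ≤ E σ := hanti ⟨h0, h1⟩ ⟨one_pos, le_rfl⟩ h1
    refine h2.trans ?_
    have h3 : Real.exp (-c * σ ^ (1 - β)) ≤ 1 := by
      rw [Real.exp_le_one_iff]
      have : 0 < σ ^ (1 - β) := by positivity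
      nlinarith
    have : σ ^ (2 * α) * Real.exp (-c * σ ^ (1 - β)) ≤ σ ^ (2 * α) :=
      mul_le_of_le_one_right (by positivity) h3
    exact mul_le_mul_of_nonneg_left this (by positivity)

/-- A Selberg–Delange type asymptotic: if `Λ a` has logarithmic mean value `α` with a
sufficiently good error term then `∑_{n ≤ e^V} a(n) ~ C₀ V^α` with `C₀ ≠ 0`. -/
theorem LL_main {α β C : ℝ} (hα : 0 < α) (hβ : 0 < β) (hβα : β < α) (hβ1 : β < 1)
    (hC : 0 < C) (ha1 : a 1 = 1)
    (hmul : ∀ m n : ℕ, m ≠ 0 → n ≠ 0 → a (m * n) = a m * a n)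
    (hnorm : ∀ n : ℕ, 1 ≤ n → ‖a n‖ ≤ (n : ℝ)⁻¹)
    (hM : ∀ N : ℕ, 1 ≤ N → ‖∑ n ∈ Icc 1 N, (Λ n : ℂ) * a n - ((α * Real.log N : ℝ) : ℂ)‖
      ≤ C * (1 + Real.log N) ^ β) :
    ∃ C₀ : ℂ, C₀ ≠ 0 ∧ ∃ C' : ℝ, 0 < C' ∧ ∀ V : ℝ, 1 ≤ V →
      ‖LL a V - C₀ * ((V ^ α : ℝ) : ℂ)‖ ≤ C' * V ^ β := by
  obtain ⟨C₀, C', hC'0, hC'⟩ := LL_asymp (a := a) hα hβ (K := C + α) (by positivity) hβα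
    fun V hV => approx_ode hα hβ hC hmul hnorm hM hV
  refine ⟨C₀, ?_, C', hC'0, hC'⟩
  rintro rfl
  have hps : ∀ N : ℕ, 1 ≤ N → ‖∑ n ∈ Icc 1 N, a n‖ ≤ (C' + 2) * (1 + Real.log N) ^ β := by
    intro N hN
    have hN0 : (0 : ℝ) < N := by exact_mod_cast hN
    have hl := Real.log_natCast_nonneg N
    have hLL : LL a (Real.log N) = ∑ n ∈ Icc 1 N, a n := by
      rw [LL, Real.exp_log hN0, Nat.floor_natCast]
    have h1 : 1 ≤ (1 + Real.log N) ^ β := Real.one_le_rpow (by linarith) hβ.le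
    rcases le_total 1 (Real.log N) with h | h
    · have h2 := hC' _ h
      rw [hLL, zero_mul, sub_zero] at h2
      have h3 : Real.log N ^ β ≤ (1 + Real.log N) ^ β :=
        Real.rpow_le_rpow hl (by linarith) hβ.le
      nlinarith
    · have h2 := sum_norm_le hnorm hl
      rw [Real.exp_log hN0, Nat.floor_natCast] at h2
      have h3 := norm_sum_le (Icc 1 N) a
      nlinarith
  obtain ⟨e₁, he₁, hlow⟩ := LSeries_lower hα hβ hβ1 hC ha1 hmul hnorm hM
  have hup : ∀ σ : ℝ, 0 < σ → σ ≤ 1 → e₁ ≤ (4 * (C' + 2)) ^ 2 * σ ^ (2 * (α - β)) := by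
    intro σ h0 h1
    have hb := LSeries_bound (c := a) (by positivity) hβ hβ1.le hps h0 h1
      (LSeriesSummable_of_abscissaOfAbsConv_lt_re (abscissa_lt hnorm h0))
    refine (hlow σ h0 h1).trans ?_
    calc _ ≤ (4 * (C' + 2) * σ ^ (-β)) ^ 2 * σ ^ (2 * α) := by gcongr
      _ = (4 * (C' + 2)) ^ 2 * (σ ^ (-β) * σ ^ (-β) * σ ^ (2 * α)) := by ring
      _ = _ := by rw [← Real.rpow_add h0, ← Real.rpow_add h0]; congr 2; ring
  have ht : Tendsto (fun σ : ℝ => (4 * (C' + 2)) ^ 2 * σ ^ (2 * (α - β))) (nhdsWithin 0 (Set.Ioi 0))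
      (nhds 0) := by
    have hp : 0 < 2 * (α - β) := by linarith
    have := (Real.continuousAt_rpow_const 0 (2 * (α - β)) (Or.inr hp.le)).tendsto
    rw [Real.zero_rpow hp.ne'] at this
    simpa using (this.mono_left nhdsWithin_le_nhds).const_mul ((4 * (C' + 2)) ^ 2)
  have : e₁ ≤ 0 := by
    refine ge_of_tendsto ht ?_
    filter_upwards [Ioc_mem_nhdsGT (one_pos : (0 : ℝ) < 1)] with σ hσ
    exact hup σ hσ.1 hσ.2
  linarith

end

/-- The coefficients `ff t n / n^(1+it)`. -/
noncomputable def aa (t : ℝ) (n : ℕ) : ℂ := (ff t n : ℂ) * (n : ℂ) ^ (-(1 + t * Complex.I))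

lemma aa_norm (t : ℝ) (n : ℕ) (hn : 1 ≤ n) : ‖aa t n‖ ≤ (n : ℝ)⁻¹ := by
  rw [aa, norm_mul, Complex.norm_real, Real.norm_eq_abs]
  have h1 := norm_natCast_cpow_le (s := 1 + t * Complex.I) hn (by simp)
  calc _ ≤ 1 * (n : ℝ)⁻¹ := mul_le_mul (abs_ff_le t n) h1 (norm_nonneg _) zero_le_one
    _ = _ := one_mul _

/-- The resonance turned into an asymptotic for the partial sums of `f(n) n^{-1-it}`; the error
term is smaller than the main term because `3 / 5 < 2 / π`. -/
theorem LL_aa {t : ℝ} (ht : t ≠ 0) :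
    ∃ C₀ : ℂ, C₀ ≠ 0 ∧ ∃ C' : ℝ, 0 < C' ∧ ∀ V : ℝ, 1 ≤ V →
      ‖LL (aa t) V - C₀ * ((V ^ (2 / Real.pi) : ℝ) : ℂ)‖ ≤ C' * V ^ (3 / 5 : ℝ) := by
  obtain ⟨C, hC, h⟩ := resonance ht
  have hpi := Real.pi_lt_d2
  refine LL_main (C := C) (by have := Real.pi_pos; positivity) (by norm_num) ?_ (by norm_num) hC ?_
    ?_ (aa_norm t) ?_
  · rw [div_lt_div_iff₀ (by norm_num) Real.pi_pos]; linarith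
  · simp [aa, ff_one]
  · intro m n hm hn
    rw [aa, aa, aa, ff_mul t hm hn]
    push_cast
    rw [Complex.natCast_mul_natCast_cpow]; ring
  · intro N hN
    simpa only [aa, mul_assoc] using h N hN

/-! ### The kernel of the error term -/

lemma w0_pos : 0 < w0 := Real.exp_pos _

lemma one_lt_w0 : 1 < w0 := by
  rw [w0, Real.one_lt_exp_iff]
  linarith [Real.eulerMascheroniConstant_lt_two_thirds]

lemma w0_lt_two : w0 < 2 := by
  have h1 : w0 ≤ Real.exp (1 / 2) := Real.exp_le_exp.2 (by
    linarith [Real.one_half_lt_eulerMascheroniConstant])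
  have h2 : Real.exp (1 / 2) ^ 2 = Real.exp 1 := by rw [← Real.exp_nat_mul]; norm_num
  have := Real.exp_one_lt_d9
  have h3 := Real.exp_pos (1 / 2 : ℝ)
  nlinarith

/-- The kernel relating `f` to `Lsum f - Mt (1 ∗ f) (w0 ·)` in the logarithmic scale. For `0 ≤ v` it
is the fractional part of `w0 e^v` divided by `w0 e^v`. -/
noncomputable def kap (v : ℝ) : ℝ :=
  (if 0 ≤ v then 1 else 0) - (⌊w0 * Real.exp v⌋₊ : ℝ) / (w0 * Real.exp v)

lemma kap_measurable : Measurable kap := by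
  unfold kap
  refine Measurable.sub ?_ ?_
  · exact Measurable.ite measurableSet_Ici measurable_const measurable_const
  · refine Measurable.div ?_ (by fun_prop)
    exact measurable_from_nat.comp (Nat.measurable_floor.comp (by fun_prop))

/-- The support of `kap` starts at `-log w0`. -/
lemma w0_mul_exp_lt_one_iff (v : ℝ) : w0 * Real.exp v < 1 ↔ v < -Real.log w0 := by
  have h : w0 * Real.exp v = Real.exp (Real.log w0 + v) := by
    rw [Real.exp_add, Real.exp_log w0_pos]
  rw [h, Real.exp_lt_one_iff]
  constructor <;> intro h <;> linarith

lemma log_w0_pos : 0 < Real.log w0 := Real.log_pos one_lt_w0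

lemma kap_eq_zero {v : ℝ} (h : v < -Real.log w0) : kap v = 0 := by
  have h1 := (w0_mul_exp_lt_one_iff v).2 h
  rw [kap, if_neg (by linarith [log_w0_pos]), Nat.floor_eq_zero.2 h1]
  simp

lemma abs_kap_le (v : ℝ) : |kap v| ≤ Real.exp (-v) := by
  set y := w0 * Real.exp v with hy
  have hy0 : 0 < y := mul_pos w0_pos (Real.exp_pos v)
  have h1 : (⌊y⌋₊ : ℝ) ≤ y := Nat.floor_le hy0.le
  have h2 : y < ⌊y⌋₊ + 1 := Nat.lt_floor_add_one y
  rw [kap, ← hy]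
  split_ifs with h
  · have e : 1 - (⌊y⌋₊ : ℝ) / y = (y - ⌊y⌋₊) / y := by field_simp
    rw [e, abs_of_nonneg (div_nonneg (by linarith) hy0.le), div_le_iff₀ hy0, hy]
    have : Real.exp (-v) * (w0 * Real.exp v) = w0 := by
      rw [Real.exp_neg]; field_simp
    rw [this]; linarith [one_lt_w0]
  · rw [zero_sub, abs_neg, abs_of_nonneg (by positivity)]
    have : (⌊y⌋₊ : ℝ) / y ≤ 1 := (div_le_one hy0).2 h1
    exact this.trans (Real.one_le_exp (by linarith))

lemma abs_kap_le_indicator (v : ℝ) :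
    |kap v| ≤ (Set.Ici (-Real.log w0)).indicator (fun v => Real.exp (-v)) v := by
  by_cases h : v ∈ Set.Ici (-Real.log w0)
  · rw [Set.indicator_of_mem h]; exact abs_kap_le v
  · rw [Set.indicator_of_notMem h, kap_eq_zero (not_le.1 h), abs_zero]

lemma exp_indicator_integrable :
    MeasureTheory.Integrable ((Set.Ici (-Real.log w0)).indicator fun v => Real.exp (-v)) := by
  rw [MeasureTheory.integrable_indicator_iff measurableSet_Ici, integrableOn_Ici_iff_integrableOn_Ioi]
  exact integrableOn_exp_neg_Ioi _

/-- The twisted kernel `kap v * e^(-itv)`. -/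
noncomputable def tker (t v : ℝ) : ℂ := (kap v : ℂ) * Complex.exp (-(t * v * Complex.I : ℂ))

lemma norm_tker (t v : ℝ) : ‖tker t v‖ = |kap v| := by
  have : -(t * v * Complex.I : ℂ) = ((-(t * v) : ℝ) : ℂ) * Complex.I := by push_cast; ring
  rw [tker, norm_mul, this, Complex.norm_exp_ofReal_mul_I, mul_one, Complex.norm_real,
    Real.norm_eq_abs]

lemma tker_measurable (t : ℝ) : Measurable (tker t) := by
  unfold tker
  exact (Complex.measurable_ofReal.comp kap_measurable).mul (by fun_prop)

lemma tker_integrable (t : ℝ) : MeasureTheory.Integrable (tker t) := by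
  refine exp_indicator_integrable.mono' (tker_measurable t).aestronglyMeasurable ?_
  exact Eventually.of_forall fun v => by rw [norm_tker]; exact abs_kap_le_indicator v

/-- Since `kap` is a nonzero integrable function, its Fourier transform is nonzero somewhere
off the origin. -/
lemma exists_tker_integral_ne_zero : ∃ t : ℝ, t ≠ 0 ∧ ∫ v, tker t v ≠ 0 := by
  by_contra! hcon
  open FourierTransform in
  have hF : ∀ ξ : ℝ, ξ ≠ 0 → 𝓕 (fun v : ℝ => (kap v : ℂ)) ξ = 0 := by
    intro ξ hξ
    rw [Real.fourier_real_eq_integral_exp_smul, ← hcon (2 * Real.pi * ξ)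
      (by have := Real.pi_pos; positivity)]
    refine MeasureTheory.integral_congr_ae (Eventually.of_forall fun v => ?_)
    simp only [tker, smul_eq_mul]
    rw [mul_comm]; congr 2; push_cast; ring
  open FourierTransform in
  have hae : 𝓕 (fun v : ℝ => (kap v : ℂ)) =ᵐ[MeasureTheory.volume] 0 := by
    have : ∀ᵐ ξ : ℝ, ξ ≠ 0 := by simp [MeasureTheory.ae_iff]
    filter_upwards [this] with ξ hξ using hF ξ hξ
  have hint : MeasureTheory.Integrable (fun v : ℝ => (kap v : ℂ)) := by
    have e : tker 0 = fun v : ℝ => (kap v : ℂ) := by funext v; simp [tker]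
    rw [← e]; exact tker_integrable 0
  -- on `(-log w0, 0)` the kernel is continuous and nonzero, contradicting Fourier inversion there
  set L := Real.log w0 with hL
  have hLpos : 0 < L := log_w0_pos
  have hloc : ∀ v ∈ Set.Ioo (-L) 0, kap v = -(w0 * Real.exp v)⁻¹ := by
    intro v hv
    have h1 : 1 ≤ w0 * Real.exp v := by
      by_contra! hc
      have := (w0_mul_exp_lt_one_iff v).1 hc
      linarith [hv.1]
    have h2 : w0 * Real.exp v < 2 := by
      have := Real.exp_lt_one_iff.2 hv.2
      nlinarith [w0_pos, w0_lt_two]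
    have h3 : ⌊w0 * Real.exp v⌋₊ = 1 := by
      rw [Nat.floor_eq_iff (by linarith)]; norm_num; exact ⟨h1, h2⟩
    rw [kap, if_neg (not_le.2 hv.2), h3]; simp
  have hmem : -(L / 2) ∈ Set.Ioo (-L) 0 := ⟨by linarith, by linarith⟩
  have hcont : ContinuousAt (fun v : ℝ => (kap v : ℂ)) (-(L / 2)) := by
    refine ContinuousAt.congr (f := fun v : ℝ => ((-(w0 * Real.exp v)⁻¹ : ℝ) : ℂ)) ?_ ?_
    · refine Complex.continuous_ofReal.continuousAt.comp ?_
      refine ContinuousAt.neg (ContinuousAt.inv₀ (by fun_prop) ?_)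
      exact (mul_pos w0_pos (Real.exp_pos _)).ne'
    · filter_upwards [Ioo_mem_nhds hmem.1 hmem.2] with v hv
      rw [hloc v hv]
  have hinv := hint.fourierInv_fourier_eq
    ((MeasureTheory.integrable_zero ℝ ℂ MeasureTheory.volume).congr hae.symm) hcont
  rw [Real.fourierInv_eq', MeasureTheory.integral_eq_zero_of_ae ?_, hloc _ hmem] at hinv
  · have h := (mul_pos w0_pos (Real.exp_pos (-(L / 2)))).ne'
    have h2 : -(w0 * Real.exp (-(L / 2)))⁻¹ ≠ 0 := neg_ne_zero.2 (inv_ne_zero h)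
    exact h2 (by exact_mod_cast hinv.symm)
  · filter_upwards [hae] with ξ hξ
    rw [hξ]; simp

/-! ### The error term as a convolution -/

/-- `Lsum f - Mt (1 ∗ f) (w0 ·)` in the logarithmic scale is the convolution of `f(n)/n`
with `kap`. -/
lemma err_eq (f : ℕ → ℝ) {u R : ℝ} (hu : u ≤ R) :
    Lsum f (Real.exp u) - Mt (dconv f) (w0 * Real.exp u)
      = ∑ n ∈ Icc 1 ⌊w0 * Real.exp R⌋₊, f n / n * kap (u - Real.log n) := by
  set y := w0 * Real.exp u with hy
  have hy0 : 0 < y := mul_pos w0_pos (Real.exp_pos u)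
  have hexp : Real.exp u ≤ y := by
    rw [hy]; nlinarith [one_lt_w0, Real.exp_pos u]
  have hyR : y ≤ w0 * Real.exp R := by
    rw [hy]; exact mul_le_mul_of_nonneg_left (Real.exp_le_exp.2 hu) w0_pos.le
  have hL : Lsum f (Real.exp u) = ∑ n ∈ Icc 1 ⌊w0 * Real.exp R⌋₊,
      f n / n * (if 0 ≤ u - Real.log n then 1 else 0) := by
    have hsub : Icc 1 ⌊Real.exp u⌋₊ ⊆ Icc 1 ⌊w0 * Real.exp R⌋₊ :=
      Icc_subset_Icc le_rfl (Nat.floor_mono (hexp.trans hyR))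
    rw [Lsum, ← sum_subset hsub]
    · refine sum_congr rfl fun n hn => ?_
      obtain ⟨h1, h2⟩ := mem_Icc.1 hn
      rw [if_pos (sub_nonneg.2 ((log_le_iff_floor h1).2 h2)), mul_one]
    · intro n hn hn'
      have h1 := (mem_Icc.1 hn).1
      rw [if_neg fun hc => hn' (mem_Icc.2 ⟨h1, (log_le_iff_floor h1).1 (sub_nonneg.1 hc)⟩),
        mul_zero]
  have hM : Mt (dconv f) y = ∑ n ∈ Icc 1 ⌊w0 * Real.exp R⌋₊,
      f n / n * ((⌊w0 * Real.exp (u - Real.log n)⌋₊ : ℝ) / (w0 * Real.exp (u - Real.log n))) := by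
    have hsub : Icc 1 ⌊y⌋₊ ⊆ Icc 1 ⌊w0 * Real.exp R⌋₊ :=
      Icc_subset_Icc le_rfl (Nat.floor_mono hyR)
    have hyn : ∀ n : ℕ, 1 ≤ n → w0 * Real.exp (u - Real.log n) = y / n := fun n hn => by
      rw [Real.exp_sub, Real.exp_log (by exact_mod_cast hn), hy]; ring
    have hd : ∑ n ∈ Icc 1 ⌊y⌋₊, dconv f n
        = ∑ d ∈ Icc 1 ⌊y⌋₊, f d * ((⌊y⌋₊ / d : ℕ) : ℝ) := by
      have h := sum_conv f (fun _ => (1 : ℝ)) ⌊y⌋₊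
      simp only [mul_one, sum_const, Nat.card_Icc, Nat.add_sub_cancel, nsmul_eq_mul] at h
      rw [← h]
      refine sum_congr rfl fun n _ => ?_
      rw [dconv, Nat.sum_divisorsAntidiagonal (f := fun i _ => f i)]
    rw [Mt, hd, sum_div, ← sum_subset hsub]
    · refine sum_congr rfl fun n hn => ?_
      obtain ⟨h1, h2⟩ := mem_Icc.1 hn
      have hn0 : (0 : ℝ) < n := by exact_mod_cast h1
      rw [hyn n h1, Nat.floor_div_natCast]
      field_simp
    · intro n hn hn'
      have h1 := (mem_Icc.1 hn).1
      have hn0 : (0 : ℝ) < n := by exact_mod_cast h1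
      have h2 : y < n := by
        by_contra! hc
        exact hn' (mem_Icc.2 ⟨h1, (Nat.le_floor_iff hy0.le).2 hc⟩)
      rw [hyn n h1, Nat.floor_eq_zero.2 ((div_lt_one hn0).2 h2)]; simp
  rw [hL, hM, ← sum_sub_distrib]
  refine sum_congr rfl fun n _ => ?_
  rw [kap]; ring

lemma abs_kap_le_w0 (v : ℝ) : |kap v| ≤ w0 := by
  rcases lt_or_ge v (-Real.log w0) with h | h
  · rw [kap_eq_zero h, abs_zero]; exact w0_pos.le
  · refine (abs_kap_le v).trans ?_
    rw [← Real.le_log_iff_exp_le w0_pos]; linarith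

/-- A crude bound, which makes the supremum in the final statement that of a bounded set. -/
lemma err_bounded {f : ℕ → ℝ} (hf : ∀ n, |f n| ≤ 1) {u R : ℝ} (hu : u ≤ R) :
    |Lsum f (Real.exp u) - Mt (dconv f) (w0 * Real.exp u)| ≤ ⌊w0 * Real.exp R⌋₊ * w0 := by
  rw [err_eq f hu]
  refine (abs_sum_le_sum_abs _ _).trans ?_
  calc _ ≤ ∑ n ∈ Icc 1 ⌊w0 * Real.exp R⌋₊, w0 := by
        refine sum_le_sum fun n hn => ?_
        have h1 : (1 : ℝ) ≤ n := by exact_mod_cast (mem_Icc.1 hn).1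
        rw [abs_mul, abs_div, Nat.abs_cast]
        have h2 : |f n| / n ≤ 1 := (div_le_one (by linarith)).2 ((hf n).trans h1)
        have h3 := abs_kap_le_w0 (u - Real.log n)
        have h4 : 0 ≤ |f n| / n := by positivity
        nlinarith [w0_pos]
    _ = _ := by simp

/-- The primitive of the twisted kernel. -/
noncomputable def GG (t v : ℝ) : ℂ := ∫ s in Set.Iic v, tker t s

/-- The primitive of the twisted kernel is a multiple of the Heaviside function up to
an exponentially small error. -/
lemma GG_approx (t v : ℝ) :
    ‖GG t v - (∫ s, tker t s) * (((if 0 ≤ v then 1 else 0) : ℝ) : ℂ)‖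
      ≤ if -Real.log w0 ≤ v then w0 * Real.exp (-v) else 0 := by
  set L := Real.log w0 with hL
  have hLpos : 0 < L := log_w0_pos
  have hbound : ∀ S : Set ℝ, MeasurableSet S → ∀ b : ℝ, S ∩ Set.Ici (-L) ⊆ Set.Ici b →
      ‖∫ s in S, tker t s‖ ≤ Real.exp (-b) := by
    intro S hS b hSb
    have hle : ‖∫ s in S, tker t s‖
        ≤ ∫ s, (Set.Ici b).indicator (fun v => Real.exp (-v)) s := by
      rw [← MeasureTheory.integral_indicator hS]
      refine MeasureTheory.norm_integral_le_of_norm_le ?_ (Eventually.of_forall fun s => ?_)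
      · rw [MeasureTheory.integrable_indicator_iff measurableSet_Ici,
          integrableOn_Ici_iff_integrableOn_Ioi]
        exact integrableOn_exp_neg_Ioi _
      · have h0 : 0 ≤ (Set.Ici b).indicator (fun v => Real.exp (-v)) s :=
          Set.indicator_nonneg (fun x _ => (Real.exp_pos _).le) s
        by_cases hs : s ∈ S
        · rw [Set.indicator_of_mem hs, norm_tker]
          rcases lt_or_ge s (-L) with h | h
          · rw [kap_eq_zero h, abs_zero]; exact h0
          · have hb : s ∈ Set.Ici b := hSb ⟨hs, h⟩
            rw [Set.indicator_of_mem hb]; exact abs_kap_le s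
        · rw [Set.indicator_of_notMem hs, norm_zero]; exact h0
    rwa [MeasureTheory.integral_indicator measurableSet_Ici,
      MeasureTheory.integral_Ici_eq_integral_Ioi, integral_exp_neg_Ioi] at hle
  have hwL : Real.exp (-(-L)) = w0 := by rw [neg_neg, hL, Real.exp_log w0_pos]
  rcases le_or_gt 0 v with h | h
  · rw [if_pos h, if_pos (by linarith), Complex.ofReal_one, mul_one]
    have hsplit : GG t v + ∫ s in Set.Ioi v, tker t s = ∫ s, tker t s := by
      rw [GG, ← Set.compl_Iic]
      exact MeasureTheory.integral_add_compl measurableSet_Iic (tker_integrable t)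
    rw [← hsplit, sub_add_cancel_left, norm_neg]
    refine (hbound _ measurableSet_Ioi v fun x hx => Set.mem_Ici.2 (le_of_lt hx.1)).trans ?_
    nlinarith [one_lt_w0, Real.exp_pos (-v)]
  · rw [if_neg (not_le.2 h), Complex.ofReal_zero, mul_zero, sub_zero]
    split_ifs with h2
    · refine (hbound _ measurableSet_Iic (-L) fun x hx => hx.2).trans ?_
      rw [hwL]
      have : 1 ≤ Real.exp (-v) := Real.one_le_exp (by linarith)
      nlinarith [w0_pos]
    · rw [GG, MeasureTheory.setIntegral_eq_zero_of_forall_eq_zero, norm_zero]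
      intro s hs
      have : s < -L := lt_of_le_of_lt hs (not_le.1 h2)
      rw [tker, kap_eq_zero this]; simp

/-- Replacing the primitive `GG` by a step function costs a bounded amount, since the error of
`GG_approx` decays like `e^{-v}`. -/
lemma sum_GG (t : ℝ) {V R : ℝ} (hV : V ≤ R) :
    ‖∑ n ∈ Icc 1 ⌊w0 * Real.exp R⌋₊, aa t n * GG t (V - Real.log n)
      - (∫ s, tker t s) * LL (aa t) V‖ ≤ w0 ^ 2 := by
  have hE : ∀ x : ℝ, w0 * Real.exp x = Real.exp (x + Real.log w0) := fun x => by
    rw [Real.exp_add, Real.exp_log w0_pos]; ring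
  rw [LL_eq_ite (aa t) (R := R + Real.log w0) (by linarith [log_w0_pos]), ← hE, mul_sum,
    ← sum_sub_distrib]
  set y := w0 * Real.exp V with hy
  have hy0 : 0 < y := mul_pos w0_pos (Real.exp_pos V)
  have hsub : Icc 1 ⌊y⌋₊ ⊆ Icc 1 ⌊w0 * Real.exp R⌋₊ :=
    Icc_subset_Icc le_rfl (Nat.floor_mono
      (mul_le_mul_of_nonneg_left (Real.exp_le_exp.2 hV) w0_pos.le))
  have hterm : ∀ n ∈ Icc 1 ⌊w0 * Real.exp R⌋₊,
      ‖aa t n * GG t (V - Real.log n) - (∫ s, tker t s) *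
        (aa t n * (((if Real.log n ≤ V then 1 else 0) : ℝ) : ℂ))‖
        ≤ if n ∈ Icc 1 ⌊y⌋₊ then w0 * Real.exp (-V) else 0 := by
    intro n hn
    have h1 := (mem_Icc.1 hn).1
    have hn0 : (0 : ℝ) < n := by exact_mod_cast h1
    have e : aa t n * GG t (V - Real.log n) - (∫ s, tker t s) *
        (aa t n * (((if Real.log n ≤ V then 1 else 0) : ℝ) : ℂ))
        = aa t n * (GG t (V - Real.log n) - (∫ s, tker t s) *
          (((if 0 ≤ V - Real.log n then 1 else 0) : ℝ) : ℂ)) := by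
      simp only [sub_nonneg]; ring
    rw [e, norm_mul]
    refine (mul_le_mul (aa_norm t n h1) (GG_approx t _) (norm_nonneg _) (by positivity)).trans ?_
    have hiff : -Real.log w0 ≤ V - Real.log n ↔ n ∈ Icc 1 ⌊y⌋₊ := by
      rw [mem_Icc, and_iff_right h1, hy, hE, ← log_le_iff_floor h1]
      constructor <;> intro h <;> linarith
    simp only [hiff]
    split_ifs
    · rw [show -(V - Real.log n) = Real.log n + -V by ring, Real.exp_add, Real.exp_log hn0]
      apply le_of_eq; field_simp
    · simp
  refine (norm_sum_le_of_le _ hterm).trans ?_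
  rw [← sum_filter, filter_mem_eq_inter, inter_eq_right.2 hsub, sum_const, Nat.card_Icc,
    nsmul_eq_mul, Nat.add_sub_cancel]
  calc (⌊y⌋₊ : ℝ) * (w0 * Real.exp (-V)) ≤ y * (w0 * Real.exp (-V)) :=
        mul_le_mul_of_nonneg_right (Nat.floor_le hy0.le)
          (mul_nonneg w0_pos.le (Real.exp_pos _).le)
    _ = w0 ^ 2 := by rw [hy, Real.exp_neg]; field_simp

/-! ### Correlation of the error term with `e^{itu}` -/

/-- The integral of the error term against `e^{-itu}` over `[U, 2U]`, in terms of `GG`. -/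
lemma err_integral (t U : ℝ) (hU : 0 ≤ U) :
    ∫ u in U..(2 * U), ((Lsum (ff t) (Real.exp u) - Mt (dconv (ff t)) (w0 * Real.exp u) : ℝ) : ℂ)
        * Complex.exp (-(t * u * Complex.I : ℂ))
      = ∑ n ∈ Icc 1 ⌊w0 * Real.exp (2 * U)⌋₊, aa t n *
        (GG t (2 * U - Real.log n) - GG t (U - Real.log n)) := by
  have hterm : ∀ n ∈ Icc 1 ⌊w0 * Real.exp (2 * U)⌋₊, ∀ u : ℝ,
      ((ff t n / n * kap (u - Real.log n) : ℝ) : ℂ) * Complex.exp (-(t * u * Complex.I : ℂ))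
        = aa t n * tker t (u - Real.log n) := by
    intro n hn u
    have h1 := (mem_Icc.1 hn).1
    have hn0 : (n : ℂ) ≠ 0 := by exact_mod_cast (by omega : n ≠ 0)
    rw [aa, tker, neg_add, Complex.cpow_add _ _ hn0, Complex.cpow_neg_one,
      Complex.cpow_def_of_ne_zero hn0, ← Complex.natCast_log]
    have : Complex.exp (-(t * u * Complex.I : ℂ)) = Complex.exp (((Real.log n : ℝ) : ℂ) *
        (-(t * Complex.I))) * Complex.exp (-(t * ((u - Real.log n : ℝ) : ℂ) * Complex.I)) := by
      rw [← Complex.exp_add]; congr 1; push_cast; ring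
    rw [this]; push_cast; ring
  have hi : ∀ d : ℝ, IntervalIntegrable (fun u => tker t (u - d)) MeasureTheory.volume U (2 * U) :=
    fun d => ((tker_integrable t).comp_sub_right d).intervalIntegrable
  calc _ = ∫ u in U..(2 * U), ∑ n ∈ Icc 1 ⌊w0 * Real.exp (2 * U)⌋₊,
        aa t n * tker t (u - Real.log n) := by
        refine intervalIntegral.integral_congr fun u hu => ?_
        rw [Set.uIcc_of_le (by linarith)] at hu
        rw [err_eq _ hu.2]
        push_cast
        rw [sum_mul]
        refine sum_congr rfl fun n hn => ?_
        rw [← hterm n hn u]; push_cast; rfl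
    _ = ∑ n ∈ Icc 1 ⌊w0 * Real.exp (2 * U)⌋₊, ∫ u in U..(2 * U),
        aa t n * tker t (u - Real.log n) :=
        intervalIntegral.integral_finsetSum fun n _ => (hi _).const_mul _
    _ = _ := by
        refine sum_congr rfl fun n _ => ?_
        rw [intervalIntegral.integral_const_mul, intervalIntegral.integral_comp_sub_right, GG, GG,
          intervalIntegral.integral_Iic_sub_Iic (tker_integrable t).integrableOn
            (tker_integrable t).integrableOn]

/-- The error term correlates with `e^{itu}` on `[U, 2U]`: by `sum_GG` and `LL_aa` the integral is
asymptotic to a nonzero multiple of `(2U)^{2/π} - U^{2/π}`. -/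
theorem main_lower : ∃ t : ℝ, ∃ c : ℝ, 0 < c ∧ ∃ U₀ : ℝ, 1 ≤ U₀ ∧ ∀ U : ℝ, U₀ ≤ U →
    c * U ^ (2 / Real.pi) ≤
      ‖∫ u in U..(2 * U), ((Lsum (ff t) (Real.exp u) - Mt (dconv (ff t)) (w0 * Real.exp u) : ℝ) : ℂ)
        * Complex.exp (-(t * u * Complex.I : ℂ))‖ := by
  obtain ⟨t, ht, hK⟩ := exists_tker_integral_ne_zero
  obtain ⟨C₀, hC₀, C', hC'0, hC'⟩ := LL_aa ht
  set K := ∫ v, tker t v with hKdef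
  set α := 2 / Real.pi with hα
  have hpi0 := Real.pi_pos
  have hα0 : 0 < α := by positivity
  have hβα : (3 / 5 : ℝ) < α := by
    rw [hα, div_lt_div_iff₀ (by norm_num) Real.pi_pos]; linarith [Real.pi_lt_d2]
  have h2α : (1 : ℝ) < 2 ^ α := Real.one_lt_rpow (by norm_num) hα0
  set c₁ := ‖K‖ * (‖C₀‖ * (2 ^ α - 1)) with hc₁
  have hc₁0 : 0 < c₁ := by
    have := norm_pos_iff.2 hK
    have := norm_pos_iff.2 hC₀
    have : 0 < (2 : ℝ) ^ α - 1 := by linarith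
    positivity
  set c₂ := ‖K‖ * (C' * (2 ^ (3 / 5 : ℝ) + 1)) + 2 * w0 ^ 2 with hc₂
  have hlow : ∀ U : ℝ, 1 ≤ U → c₁ * U ^ α - c₂ * U ^ (3 / 5 : ℝ) ≤
      ‖∑ n ∈ Icc 1 ⌊w0 * Real.exp (2 * U)⌋₊, aa t n *
        (GG t (2 * U - Real.log n) - GG t (U - Real.log n))‖ := by
    intro U hU
    have hU0 : 0 < U := by linarith
    have g1 := sum_GG t (V := 2 * U) (R := 2 * U) le_rfl
    have g2 := sum_GG t (V := U) (R := 2 * U) (by linarith)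
    rw [← hKdef] at g1 g2
    have l1 := hC' (2 * U) (by linarith)
    have l2 := hC' U hU
    simp only [mul_sub, sum_sub_distrib]
    set S₁ := ∑ n ∈ Icc 1 ⌊w0 * Real.exp (2 * U)⌋₊, aa t n * GG t (2 * U - Real.log n)
    set S₂ := ∑ n ∈ Icc 1 ⌊w0 * Real.exp (2 * U)⌋₊, aa t n * GG t (U - Real.log n)
    rw [Real.mul_rpow (by norm_num) hU0.le] at l1
    rw [Real.mul_rpow (by norm_num) hU0.le] at l1
    have e : K * (C₀ * ((((2 : ℝ) ^ α - 1) * U ^ α : ℝ) : ℂ)) = (S₁ - S₂) - (S₁ - K * LL (aa t) (2 * U))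
        + (S₂ - K * LL (aa t) U)
        - K * (LL (aa t) (2 * U) - C₀ * ((2 ^ α * U ^ α : ℝ) : ℂ))
        + K * (LL (aa t) U - C₀ * ((U ^ α : ℝ) : ℂ)) := by
      push_cast; ring
    have n1 : ‖K * (C₀ * ((((2 : ℝ) ^ α - 1) * U ^ α : ℝ) : ℂ))‖ = c₁ * U ^ α := by
      rw [norm_mul, norm_mul, Complex.norm_real, Real.norm_of_nonneg
        (mul_nonneg (by linarith) (by positivity)), hc₁]; ring
    have n2 : ‖K * (C₀ * ((((2 : ℝ) ^ α - 1) * U ^ α : ℝ) : ℂ))‖ ≤ ‖S₁ - S₂‖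
        + ‖S₁ - K * LL (aa t) (2 * U)‖ + ‖S₂ - K * LL (aa t) U‖
        + ‖K‖ * ‖LL (aa t) (2 * U) - C₀ * ((2 ^ α * U ^ α : ℝ) : ℂ)‖
        + ‖K‖ * ‖LL (aa t) U - C₀ * ((U ^ α : ℝ) : ℂ)‖ := by
      rw [e, ← norm_mul, ← norm_mul]
      refine (norm_add_le _ _).trans (add_le_add_left ?_ _)
      refine (norm_sub_le _ _).trans (add_le_add_left ?_ _)
      refine (norm_add_le _ _).trans (add_le_add_left ?_ _)
      exact norm_sub_le _ _
    have n3 := mul_le_mul_of_nonneg_left l1 (norm_nonneg K)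
    have n4 := mul_le_mul_of_nonneg_left l2 (norm_nonneg K)
    have n5 : 1 ≤ U ^ (3 / 5 : ℝ) := Real.one_le_rpow hU (by norm_num)
    have n6 : c₂ * U ^ (3 / 5 : ℝ) = ‖K‖ * (C' * (2 ^ (3 / 5 : ℝ) * U ^ (3 / 5 : ℝ)))
        + ‖K‖ * (C' * U ^ (3 / 5 : ℝ)) + 2 * w0 ^ 2 * U ^ (3 / 5 : ℝ) := by rw [hc₂]; ring
    have n7 : 2 * w0 ^ 2 ≤ 2 * w0 ^ 2 * U ^ (3 / 5 : ℝ) :=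
      le_mul_of_one_le_right (by positivity) n5
    linarith
  have hev : ∀ᶠ U : ℝ in atTop, c₂ ≤ c₁ / 2 * U ^ (α - 3 / 5) :=
    ((tendsto_rpow_atTop (by linarith)).const_mul_atTop (by positivity)).eventually_ge_atTop c₂
  obtain ⟨U₁, hU₁⟩ := eventually_atTop.1 hev
  refine ⟨t, c₁ / 2, by positivity, max U₁ 1, le_max_right _ _, fun U hU => ?_⟩
  have hU1 : 1 ≤ U := (le_max_right _ _).trans hU
  have hU0 : 0 < U := by linarith
  rw [err_integral t U hU0.le]
  refine le_trans ?_ (hlow U hU1)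
  have h1 := mul_le_mul_of_nonneg_right (hU₁ U ((le_max_left _ _).trans hU))
    (by positivity : 0 ≤ U ^ (3 / 5 : ℝ))
  rw [mul_assoc, ← Real.rpow_add hU0, sub_add_cancel] at h1
  linarith

theorem stmt3 (ψ : ℝ → ℝ)
    (hψ_pos : ∀ X : ℝ, 3 ≤ X → 0 < ψ X)
    (hψ_mono : ∀ X Y : ℝ, 3 ≤ X → X ≤ Y → ψ Y ≤ ψ X)
    (hψ_lim : Tendsto ψ atTop (nhds 0)) :
    ∃ f : ℕ → ℝ, (∀ n, f n ∈ Set.Icc (-1 : ℝ) 1) ∧ IsMult f ∧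
      ∃ c : ℝ, 0 < c ∧ ∃ X₀ : ℝ, ∀ X : ℝ, X₀ ≤ X →
        c * ψ X / (Real.log X) ^ ((1 : ℝ) - 2 / Real.pi) ≤
          sSup ((fun x : ℝ => |Lsum f x - Mt (dconv f) (w0 * x)|) '' Set.Ioc X (X ^ 2)) := by
  obtain ⟨t, c, hc, U₀, hU₀, hmain⟩ := main_lower
  refine ⟨ff t, fun n => abs_le.1 (abs_ff_le t n), ff_isMult t, c / ψ 3,
    div_pos hc (hψ_pos 3 le_rfl), max 3 (Real.exp U₀), fun X hX => ?_⟩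
  have hX3 : 3 ≤ X := (le_max_left _ _).trans hX
  have hX0 : 0 < X := by linarith
  set U := Real.log X with hUdef
  have hUX : Real.exp U = X := Real.exp_log hX0
  have hU : U₀ ≤ U := by
    rw [hUdef, Real.le_log_iff_exp_le hX0]; exact (le_max_right _ _).trans hX
  have hU0 : 0 < U := by linarith
  set S := sSup ((fun x : ℝ => |Lsum (ff t) x - Mt (dconv (ff t)) (w0 * x)|) '' Set.Ioc X (X ^ 2))
    with hS
  have hX2 : Real.exp (2 * U) = X ^ 2 := by
    rw [mul_comm, Real.exp_mul, hUX]; norm_num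
  have hbdd : BddAbove
      ((fun x : ℝ => |Lsum (ff t) x - Mt (dconv (ff t)) (w0 * x)|) '' Set.Ioc X (X ^ 2)) := by
    refine ⟨⌊w0 * Real.exp (2 * U)⌋₊ * w0, ?_⟩
    rintro _ ⟨x, hx, rfl⟩
    have hx0 : 0 < x := hX0.trans hx.1
    have := err_bounded (abs_ff_le t) (u := Real.log x) (R := 2 * U)
      ((Real.log_le_iff_le_exp hx0).2 (by rw [hX2]; exact hx.2))
    rwa [Real.exp_log hx0] at this
  have hup : ‖∫ u in U..(2 * U), ((Lsum (ff t) (Real.exp u) -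
        Mt (dconv (ff t)) (w0 * Real.exp u) : ℝ) : ℂ) * Complex.exp (-(t * u * Complex.I : ℂ))‖
      ≤ S * |2 * U - U| := by
    refine intervalIntegral.norm_integral_le_of_norm_le_const fun u hu => ?_
    rw [Set.uIoc_of_le (by linarith)] at hu
    have e : -(t * u * Complex.I : ℂ) = ((-(t * u) : ℝ) : ℂ) * Complex.I := by push_cast; ring
    rw [norm_mul, e, Complex.norm_exp_ofReal_mul_I, mul_one, Complex.norm_real, Real.norm_eq_abs]
    refine le_csSup hbdd ⟨Real.exp u, ⟨?_, ?_⟩, rfl⟩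
    · rw [← hUX]; exact Real.exp_lt_exp.2 hu.1
    · rw [← hX2]; exact Real.exp_le_exp.2 hu.2
  have h1 := (hmain U hU).trans hup
  rw [show 2 * U - U = U by ring, abs_of_pos hU0] at h1
  have hψ3 := hψ_pos 3 le_rfl
  -- `ψ` is bounded by `ψ 3`, so only the case of constant `ψ` matters
  have hψX : c / ψ 3 * ψ X ≤ c := by
    rw [div_mul_eq_mul_div, div_le_iff₀ hψ3]
    exact mul_le_mul_of_nonneg_left (hψ_mono 3 X le_rfl hX3) hc.le
  rw [div_le_iff₀ (by positivity)]
  refine hψX.trans ?_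
  have h2 : c * U ^ (2 / Real.pi) ≤ (S * U ^ (1 - 2 / Real.pi)) * U ^ (2 / Real.pi) := by
    rw [mul_assoc, ← Real.rpow_add hU0, sub_add_cancel, Real.rpow_one]; exact h1
  exact le_of_mul_le_mul_right h2 (by positivity)
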